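/- arXiv:1705.06884 — 4 statements merged into one kernel-verified Lean document; each statement's English description precedes it below -/
import Mathlib

section
/- The loss function ℓ2 is differentiable on ℝ^d × ℝ^{d×k}, and its partial gradient with respect to W is given by ∇_W ℓ2(y,W) = (W h*(y,W) + r*(y,W) − y) h*(y,W)^T, where (h*(y,W), r*(y,W)) is the unique minimizer of ℓ̃2(y,W,·,·) over H × R. -/
open scoped RealInnerProductSpace ENNReal

noncomputable section

/-- `ℝ^d` with the Euclidean norm. -/
abbrev Vec (d : ℕ) := EuclideanSpace ℝ (Fin d)

/-- `ℝ^{d×k}` with the Frobenius (Euclidean) norm, viewed as a Euclidean space. -/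
abbrev Mat (d k : ℕ) := EuclideanSpace ℝ (Fin d × Fin k)

/-- Matrix-vector product `W h`. -/
def matMulVec {d k : ℕ} (W : Mat d k) (h : Vec k) : Vec d :=
  (WithLp.equiv 2 (Fin d → ℝ)).symm (fun i => ∑ j, W (i, j) * h j)

/-- The function `ℓ̃₂(y, W, h, r) = (1/2)‖y − Wh − r‖² + φ(h) + ϕ(r)`, with values in `[0,∞]`. -/
def ell2t {d k : ℕ} (φ : Vec k → ℝ≥0∞) (ϕ' : Vec d → ℝ≥0∞)
    (y : Vec d) (W : Mat d k) (h : Vec k) (r : Vec d) : ℝ≥0∞ :=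
  ENNReal.ofReal (‖y - matMulVec W h - r‖ ^ 2 / 2) + φ h + ϕ' r

/-- Convexity for functions with values in `[0,∞]`. -/
def ConvexFnENN {E : Type*} [AddCommMonoid E] [Module ℝ E] (γ : E → ℝ≥0∞) : Prop :=
  ∀ x y : E, ∀ a b : ℝ, 0 ≤ a → 0 ≤ b → a + b = 1 →
    γ (a • x + b • y) ≤ ENNReal.ofReal a * γ x + ENNReal.ofReal b * γ y

/-- The matrix `(W h + r − y) hᵀ`, the claimed gradient of `ℓ₂(y, ·)` at `W`
    (with `h = h*(y,W)`, `r = r*(y,W)`). -/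
def gradFormula {d k : ℕ} (y : Vec d) (W : Mat d k) (h : Vec k) (r : Vec d) : Mat d k :=
  (WithLp.equiv 2 (Fin d × Fin k → ℝ)).symm
    (fun p => (matMulVec W h + r - y) p.1 * h p.2)

/-!
The minimizer of a strongly convex function has quadratic growth around it. The objectives at two
parameters `p` and `p₀` differ by at most `κ p * (1 + ‖z‖) ^ 2` with `κ p → 0` as `p → p₀`, so this
growth forces the minimizer to depend continuously on `p`. Only the smooth quadratic part of the
objective involves `p`; by minimality the increment of the minimal value is squeezed between the
increments in `p` of that part at the new and at the old minimizer, and both of these are given by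
the partial derivative at the old minimizer up to `o(‖p - p₀‖)`.
-/

section ParametricMinimization

open Filter Topology Asymptotics

theorem strongConvexOn_toReal {V : Type*} [NormedAddCommGroup V] [NormedSpace ℝ V] {S : Set V}
    {m : ℝ} {g : V → ℝ≥0∞} (hS : Convex ℝ S) (hm : 0 ≤ m)
    (hg : ∀ x ∈ S, ∀ y ∈ S, ∀ a b : ℝ, 0 ≤ a → 0 ≤ b → a + b = 1 →
      g (a • x + b • y) + ENNReal.ofReal (m / 2 * (a * b) * ‖x - y‖ ^ 2)
        ≤ ENNReal.ofReal a * g x + ENNReal.ofReal b * g y) :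
    StrongConvexOn (S ∩ {z | g z ≠ ⊤}) m fun z => (g z).toReal := by
  have rhs_ne_top : ∀ {x y} (a b : ℝ), g x ≠ ⊤ → g y ≠ ⊤ →
      ENNReal.ofReal a * g x + ENNReal.ofReal b * g y ≠ ⊤ := fun a b hx hy =>
    ENNReal.add_ne_top.2
      ⟨ENNReal.mul_ne_top ENNReal.ofReal_ne_top hx, ENNReal.mul_ne_top ENNReal.ofReal_ne_top hy⟩
  refine ⟨fun x hx y hy a b ha hb hab => ⟨hS hx.1 hy.1 ha hb hab, ?_⟩,
    fun x hx y hy a b ha hb hab => ?_⟩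
  · exact ne_top_of_le_ne_top (rhs_ne_top a b hx.2 hy.2)
      (le_self_add.trans (hg x hx.1 y hy.1 a b ha hb hab))
  · have hle := hg x hx.1 y hy.1 a b ha hb hab
    have hrhs := rhs_ne_top a b hx.2 hy.2
    have hreal := ENNReal.toReal_mono hrhs hle
    rw [ENNReal.toReal_add (ne_top_of_le_ne_top hrhs (le_self_add.trans hle)) ENNReal.ofReal_ne_top,
      ENNReal.toReal_add (ENNReal.mul_ne_top ENNReal.ofReal_ne_top hx.2)
        (ENNReal.mul_ne_top ENNReal.ofReal_ne_top hy.2),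
      ENNReal.toReal_mul, ENNReal.toReal_mul, ENNReal.toReal_ofReal ha, ENNReal.toReal_ofReal hb,
      ENNReal.toReal_ofReal (by positivity)] at hreal
    simp only [smul_eq_mul]
    linarith

theorem add_norm_sub_sq_le_of_strongConvexOn {V : Type*} [NormedAddCommGroup V] [NormedSpace ℝ V]
    {S : Set V} {m : ℝ} {f : V → ℝ} {x y : V} (hf : StrongConvexOn S m f) (hmin : IsMinOn f S x)
    (hx : x ∈ S) (hy : y ∈ S) : f x + m / 2 * ‖y - x‖ ^ 2 ≤ f y := by
  have growth : ∀ a ∈ Set.Ioo (0 : ℝ) 1, f x + a * (m / 2 * ‖y - x‖ ^ 2) ≤ f y := by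
    rintro a ⟨ha₀, ha₁⟩
    have hb : 0 < 1 - a := sub_pos.2 ha₁
    have hconv := hf.2 hx hy ha₀.le hb.le (add_sub_cancel a 1)
    have hle := hmin (hf.1 hx hy ha₀.le hb.le (add_sub_cancel a 1))
    simp only [Set.mem_ofPred_eq, smul_eq_mul, norm_sub_rev x y] at hconv hle
    refine le_of_mul_le_mul_left ?_ hb
    linarith
  have hlim : Tendsto (fun a : ℝ => f x + a * (m / 2 * ‖y - x‖ ^ 2)) (𝓝[<] 1)
      (𝓝 (f x + 1 * (m / 2 * ‖y - x‖ ^ 2))) :=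
    Tendsto.mono_left (Continuous.tendsto (by fun_prop) 1) nhdsWithin_le_nhds
  rw [one_mul] at hlim
  exact le_of_tendsto hlim (eventually_of_mem (Ioo_mem_nhdsLT zero_lt_one) growth)

theorem tendsto_minimizer_of_quadratic_growth {X Z : Type*} [SeminormedAddCommGroup Z]
    {l : Filter X} {S : Set Z} {f : X → Z → ℝ} {g : Z → ℝ} {c : ℝ} {κ : X → ℝ} {ζ : X → Z}
    {z₀ : Z} (hc : 0 < c) (hz₀ : z₀ ∈ S) (hg : ∀ z ∈ S, g z₀ + c * ‖z - z₀‖ ^ 2 ≤ g z)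
    (hζ : ∀ x, ζ x ∈ S) (hmin : ∀ x, IsMinOn (f x) S (ζ x))
    (hfg : ∀ x, ∀ z ∈ S, |f x z - g z| ≤ κ x * (1 + ‖z‖) ^ 2) (hκ : Tendsto κ l (𝓝 0)) :
    Tendsto ζ l (𝓝 z₀) := by
  set A := (1 + ‖z₀‖) ^ 2
  have sq_le : ∀ z, (1 + ‖z‖) ^ 2 ≤ 2 * A + 2 * ‖z - z₀‖ ^ 2 := fun z => by
    have htri : 1 + ‖z‖ ≤ (1 + ‖z₀‖) + ‖z - z₀‖ := by
      linarith [norm_le_norm_add_norm_sub' z z₀]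
    calc (1 + ‖z‖) ^ 2 ≤ ((1 + ‖z₀‖) + ‖z - z₀‖) ^ 2 := by gcongr
      _ ≤ 2 * ((1 + ‖z₀‖) ^ 2 + ‖z - z₀‖ ^ 2) := add_sq_le
      _ = 2 * A + 2 * ‖z - z₀‖ ^ 2 := mul_add _ _ _
  have perturbed_growth :
      ∀ x, c * ‖ζ x - z₀‖ ^ 2 ≤ κ x * (3 * A + 2 * ‖ζ x - z₀‖ ^ 2) := fun x => by
    have hκx : 0 ≤ κ x :=
      nonneg_of_mul_nonneg_left ((abs_nonneg _).trans (hfg x z₀ hz₀)) (by positivity)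
    have hopt : f x (ζ x) ≤ f x z₀ := hmin x hz₀
    have hnew := (abs_le.1 (hfg x (ζ x) (hζ x))).1
    have hold := (abs_le.1 (hfg x z₀ hz₀)).2
    have hsq := mul_le_mul_of_nonneg_left (sq_le (ζ x)) hκx
    linarith [hg (ζ x) (hζ x)]
  have norm_le : ∀ᶠ x in l, ‖ζ x - z₀‖ ≤ √(6 * A / c * κ x) := by
    filter_upwards [hκ.eventually (gt_mem_nhds (show (0 : ℝ) < c / 4 by positivity))] with x hx
    refine Real.le_sqrt_of_sq_le ?_
    rw [div_mul_eq_mul_div, le_div_iff₀ hc]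
    have habsorb := mul_le_mul_of_nonneg_right hx.le (sq_nonneg ‖ζ x - z₀‖)
    linarith [perturbed_growth x]
  refine tendsto_iff_norm_sub_tendsto_zero.2 (squeeze_zero' (.of_forall fun _ => norm_nonneg _)
    norm_le ?_)
  simpa using (hκ.const_mul (6 * A / c)).sqrt

theorem isLittleO_sub_sub_of_continuousAt_fderiv {P Z G : Type*} [NormedAddCommGroup P]
    [NormedSpace ℝ P] [NormedAddCommGroup G] [NormedSpace ℝ G] [TopologicalSpace Z] {S : Set Z}
    {f : P → Z → G} {f' : P → Z → P →L[ℝ] G} {ξ : P → Z} {p₀ : P} {z₀ : Z}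
    (hf : ∀ p, ∀ z ∈ S, HasFDerivAt (f · z) (f' p z) p)
    (hf' : ContinuousAt (fun q : P × Z => f' q.1 q.2) (p₀, z₀))
    (hξ : ∀ p, ξ p ∈ S) (hξ₀ : Tendsto ξ (𝓝 p₀) (𝓝 z₀)) :
    (fun p => f p (ξ p) - f p₀ (ξ p) - f' p₀ z₀ (p - p₀)) =o[𝓝 p₀] fun p => p - p₀ := by
  refine isLittleO_iff.2 fun ε hε => ?_
  have hclose := hf'.eventually (Metric.closedBall_mem_nhds (f' p₀ z₀) hε)
  rw [nhds_prod_eq, eventually_prod_iff] at hclose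
  obtain ⟨U, hU, V, hV, hbound⟩ := hclose
  obtain ⟨δ, hδ, hball⟩ := Metric.eventually_nhds_iff_ball.1 hU
  filter_upwards [Metric.ball_mem_nhds p₀ hδ, hξ₀.eventually hV] with p hp hξp
  exact (convex_ball p₀ δ).norm_image_sub_le_of_norm_hasFDerivWithin_le'
    (fun q _ => (hf q (ξ p) (hξ p)).hasFDerivWithinAt)
    (fun q hq => mem_closedBall_iff_norm.1 (hbound (hball q hq) hξp)) (Metric.mem_ball_self hδ) hp

theorem hasFDerivAt_comp_minimizer {P Z : Type*} [NormedAddCommGroup P] [NormedSpace ℝ P]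
    [TopologicalSpace Z] {S : Set Z} {f : P → Z → ℝ} {f' : P → Z → P →L[ℝ] ℝ} {ζ : P → Z} {p₀ : P}
    (hζ : ∀ p, ζ p ∈ S) (hmin : ∀ p, IsMinOn (f p) S (ζ p))
    (hf : ∀ p, ∀ z ∈ S, HasFDerivAt (f · z) (f' p z) p)
    (hf' : ContinuousAt (fun q : P × Z => f' q.1 q.2) (p₀, ζ p₀)) (hζ₀ : ContinuousAt ζ p₀) :
    HasFDerivAt (fun p => f p (ζ p)) (f' p₀ (ζ p₀)) p₀ := by
  have hnew := isLittleO_sub_sub_of_continuousAt_fderiv hf hf' hζ hζ₀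
  have hold := isLittleO_sub_sub_of_continuousAt_fderiv hf hf' (fun _ => hζ p₀) tendsto_const_nhds
  refine .of_isLittleO (IsBigO.trans_isLittleO (.of_norm_le fun p => ?_)
    (hnew.norm_left.add hold.norm_left))
  have hle : f p (ζ p) ≤ f p (ζ p₀) := hmin p (hζ p₀)
  have hle₀ : f p₀ (ζ p₀) ≤ f p₀ (ζ p) := hmin p₀ (hζ p)
  refine (abs_le_max_abs_abs ?_ ?_).trans (max_le_add_of_nonneg (abs_nonneg _) (abs_nonneg _)) <;>
    linarith

end ParametricMinimization

section BilinearResidual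

variable {E F M : Type*} [NormedAddCommGroup E] [NormedSpace ℝ E]
  [NormedAddCommGroup F] [NormedSpace ℝ F] [NormedAddCommGroup M] [NormedSpace ℝ M]

/-- The derivative `(y, W) ↦ y - W h` of the residual in the parameter, where the product `W h`
is given by the bilinear map `B`. -/
def bilinResidualFDeriv (B : M →L[ℝ] E →L[ℝ] F) (h : E) : F × M →L[ℝ] F :=
  .fst ℝ F M - (B.flip h).comp (.snd ℝ F M)

/-- The residual `y - W h - r` at the parameter `p = (y, W)` and the variable `z = (h, r)`. -/
def bilinResidual (B : M →L[ℝ] E →L[ℝ] F) (p : F × M) (z : E × F) : F :=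
  bilinResidualFDeriv B z.1 p - z.2

/-- The least-squares loss `‖y - W h - r‖² / 2` at the parameter `p = (y, W)` and the variable
`z = (h, r)`. -/
def leastSquaresLoss (B : M →L[ℝ] E →L[ℝ] F) (p : F × M) (z : E × F) : ℝ :=
  ‖bilinResidual B p z‖ ^ 2 / 2

theorem bilinResidualFDeriv_apply (B : M →L[ℝ] E →L[ℝ] F) (h : E) (p : F × M) :
    bilinResidualFDeriv B h p = p.1 - B p.2 h :=
  rfl

theorem norm_bilinResidualFDeriv_apply_le (B : M →L[ℝ] E →L[ℝ] F) (h : E) (p : F × M) :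
    ‖bilinResidualFDeriv B h p‖ ≤ (1 + ‖B‖) * ‖p‖ * (1 + ‖h‖) :=
  calc ‖p.1 - B p.2 h‖ ≤ ‖p.1‖ + ‖B‖ * ‖p.2‖ * ‖h‖ :=
        (norm_sub_le _ _).trans (by gcongr; exact B.le_opNorm₂ _ _)
    _ ≤ ‖p‖ + ‖B‖ * ‖p‖ * ‖h‖ := by
        gcongr
        exacts [norm_fst_le p, norm_snd_le p]
    _ ≤ (1 + ‖B‖) * ‖p‖ * (1 + ‖h‖) := by
        have : 0 ≤ ‖B‖ * ‖p‖ + ‖p‖ * ‖h‖ := by positivity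
        linarith

theorem norm_bilinResidual_le (B : M →L[ℝ] E →L[ℝ] F) (p : F × M) (z : E × F) :
    ‖bilinResidual B p z‖ ≤ ((1 + ‖B‖) * ‖p‖ + 1) * (1 + ‖z‖) :=
  calc ‖bilinResidual B p z‖ ≤ ‖bilinResidualFDeriv B z.1 p‖ + ‖z.2‖ := norm_sub_le _ _
    _ ≤ (1 + ‖B‖) * ‖p‖ * (1 + ‖z.1‖) + ‖z.2‖ := by
        gcongr
        exact norm_bilinResidualFDeriv_apply_le B z.1 p
    _ ≤ (1 + ‖B‖) * ‖p‖ * (1 + ‖z‖) + (1 + ‖z‖) := by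
        gcongr
        exacts [norm_fst_le z, (norm_snd_le z).trans (le_add_of_nonneg_left zero_le_one)]
    _ = ((1 + ‖B‖) * ‖p‖ + 1) * (1 + ‖z‖) := by ring

theorem abs_leastSquaresLoss_sub_le (B : M →L[ℝ] E →L[ℝ] F) (p q : F × M) (z : E × F) :
    |leastSquaresLoss B p z - leastSquaresLoss B q z| ≤
      (1 + ‖B‖) * ‖p - q‖ * ((1 + ‖B‖) * (‖p‖ + ‖q‖) + 2) / 2 * (1 + ‖z‖) ^ 2 := by
  set u := bilinResidual B p z
  set v := bilinResidual B q z
  have hdiff : |‖u‖ - ‖v‖| ≤ (1 + ‖B‖) * ‖p - q‖ * (1 + ‖z‖) :=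
    calc |‖u‖ - ‖v‖| ≤ ‖u - v‖ := abs_norm_sub_norm_le _ _
      _ = ‖bilinResidualFDeriv B z.1 (p - q)‖ := by
          rw [map_sub]; exact congrArg norm (sub_sub_sub_cancel_right _ _ _)
      _ ≤ (1 + ‖B‖) * ‖p - q‖ * (1 + ‖z.1‖) := norm_bilinResidualFDeriv_apply_le B z.1 (p - q)
      _ ≤ (1 + ‖B‖) * ‖p - q‖ * (1 + ‖z‖) := by
          gcongr
          exact norm_fst_le z
  have hsum : ‖u‖ + ‖v‖ ≤ ((1 + ‖B‖) * (‖p‖ + ‖q‖) + 2) * (1 + ‖z‖) := by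
    linarith [norm_bilinResidual_le B p z, norm_bilinResidual_le B q z]
  calc |‖u‖ ^ 2 / 2 - ‖v‖ ^ 2 / 2| = |‖u‖ - ‖v‖| * (‖u‖ + ‖v‖) / 2 := by
        rw [← sub_div, sq_sub_sq, abs_div, abs_mul, abs_two, mul_comm,
          abs_of_nonneg (by positivity : 0 ≤ ‖u‖ + ‖v‖)]
    _ ≤ (1 + ‖B‖) * ‖p - q‖ * (1 + ‖z‖) *
          (((1 + ‖B‖) * (‖p‖ + ‖q‖) + 2) * (1 + ‖z‖)) / 2 := by gcongr
    _ = (1 + ‖B‖) * ‖p - q‖ * ((1 + ‖B‖) * (‖p‖ + ‖q‖) + 2) / 2 * (1 + ‖z‖) ^ 2 := by ring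

end BilinearResidual

section BilinearLeastSquares

open Filter Topology

variable {E F M : Type*} [NormedAddCommGroup E] [NormedSpace ℝ E]
  [NormedAddCommGroup F] [InnerProductSpace ℝ F] [NormedAddCommGroup M] [NormedSpace ℝ M]

/-- The partial derivative of `leastSquaresLoss` in the parameter. -/
def leastSquaresLossFDeriv (B : M →L[ℝ] E →L[ℝ] F) (p : F × M) (z : E × F) : F × M →L[ℝ] ℝ :=
  (innerSL ℝ (bilinResidual B p z)).comp (bilinResidualFDeriv B z.1)

theorem hasFDerivAt_leastSquaresLoss (B : M →L[ℝ] E →L[ℝ] F) (p : F × M) (z : E × F) :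
    HasFDerivAt (leastSquaresLoss B · z) (leastSquaresLossFDeriv B p z) p := by
  have hres : HasFDerivAt (bilinResidual B · z) (bilinResidualFDeriv B z.1) p :=
    (bilinResidualFDeriv B z.1).hasFDerivAt.sub_const z.2
  refine (hres.norm_sq.mul_const (2⁻¹ : ℝ)).congr_fderiv ?_
  ext q <;> simp [leastSquaresLossFDeriv]

theorem continuous_leastSquaresLossFDeriv (B : M →L[ℝ] E →L[ℝ] F) :
    Continuous fun q : (F × M) × (E × F) => leastSquaresLossFDeriv B q.1 q.2 := by
  unfold leastSquaresLossFDeriv bilinResidual bilinResidualFDeriv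
  fun_prop

theorem hasFDerivAt_min_leastSquaresLoss_add (B : M →L[ℝ] E →L[ℝ] F) {S : Set (E × F)} {m : ℝ}
    {g : F × M → E × F → ℝ} {c : E × F → ℝ} {ζ : F × M → E × F} (hm : 0 < m)
    (hg : ∀ p, ∀ z ∈ S, g p z = leastSquaresLoss B p z + c z)
    (hsc : ∀ p, StrongConvexOn S m (g p)) (hζ : ∀ p, ζ p ∈ S)
    (hmin : ∀ p, IsMinOn (g p) S (ζ p)) (p₀ : F × M) :
    HasFDerivAt (fun p => g p (ζ p)) (leastSquaresLossFDeriv B p₀ (ζ p₀)) p₀ := by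
  have hmodulus : Tendsto (fun p => (1 + ‖B‖) * ‖p - p₀‖ * ((1 + ‖B‖) * (‖p‖ + ‖p₀‖) + 2) / 2)
      (𝓝 p₀) (𝓝 0) :=
    Continuous.tendsto' (by fun_prop) _ _ (by simp)
  have hcont : ContinuousAt ζ p₀ :=
    tendsto_minimizer_of_quadratic_growth (half_pos hm) (hζ p₀)
      (fun _ hz => add_norm_sub_sq_le_of_strongConvexOn (hsc p₀) (hmin p₀) (hζ p₀) hz) hζ hmin
      (fun p z hz => by
        rw [hg p z hz, hg p₀ z hz, add_sub_add_right_eq_sub]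
        exact abs_leastSquaresLoss_sub_le B p p₀ z)
      hmodulus
  exact hasFDerivAt_comp_minimizer hζ hmin
    (fun p z hz => ((hasFDerivAt_leastSquaresLoss B p z).add_const (c z)).congr_of_eventuallyEq
      (.of_forall fun q => hg q z hz))
    (continuous_leastSquaresLossFDeriv B).continuousAt hcont

end BilinearLeastSquares

section Ell2

variable {d k : ℕ}

/-- The matrix-vector product as a continuous bilinear map. -/
def matMulVecBilin (d k : ℕ) : Mat d k →L[ℝ] Vec k →L[ℝ] Vec d :=
  LinearMap.toContinuousBilinearMap <| LinearMap.mk₂ ℝ matMulVec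
    (fun W V h => by ext i; simp [matMulVec, add_mul, Finset.sum_add_distrib])
    (fun c W h => by ext i; simp [matMulVec, Finset.mul_sum, mul_assoc])
    (fun W h h' => by ext i; simp [matMulVec, mul_add, Finset.sum_add_distrib])
    (fun c W h => by ext i; simp [matMulVec, Finset.mul_sum, mul_left_comm])

theorem matMulVecBilin_apply (W : Mat d k) (h : Vec k) : matMulVecBilin d k W h = matMulVec W h :=
  rfl

theorem inner_gradFormula (y : Vec d) (W V : Mat d k) (h : Vec k) (r : Vec d) :
    ⟪gradFormula y W h r, V⟫ = ⟪matMulVec W h + r - y, matMulVec V h⟫ := by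
  simp only [PiLp.inner_apply, Fintype.sum_prod_type]
  refine Finset.sum_congr rfl fun i _ => ?_
  simp only [gradFormula, matMulVec, RCLike.inner_apply, conj_trivial, WithLp.equiv_symm_apply,
    Finset.sum_mul]
  exact Finset.sum_congr rfl fun j _ => by ring

theorem hasGradientAt_of_hasFDerivAt_leastSquaresLossFDeriv {f : Vec d × Mat d k → ℝ} {y : Vec d}
    {W : Mat d k} {h : Vec k} {r : Vec d}
    (hf : HasFDerivAt f (leastSquaresLossFDeriv (matMulVecBilin d k) (y, W) (h, r)) (y, W)) :
    HasGradientAt (fun W' => f (y, W')) (gradFormula y W h r) W := by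
  rw [hasGradientAt_iff_hasFDerivAt]
  refine (hf.comp W (hasFDerivAt_prodMk_right y W)).congr_fderiv ?_
  ext V
  change ⟪y - matMulVec W h - r, 0 - matMulVec V h⟫ = ⟪gradFormula y W h r, V⟫
  rw [inner_gradFormula, zero_sub, inner_neg_right, ← inner_neg_left]
  congr 1
  abel

/-- The pairs in `H × R` at which both regularizers are finite, that is, the points over which
`ell2t` is effectively minimized. This set does not depend on the parameter `(y, W)`. -/
def feasibleSet (φ : Vec k → ℝ≥0∞) (ψ : Vec d → ℝ≥0∞) (H : Set (Vec k)) (R : Set (Vec d)) :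
    Set (Vec k × Vec d) :=
  H ×ˢ R ∩ {z | φ z.1 ≠ ⊤ ∧ ψ z.2 ≠ ⊤}

variable {φ : Vec k → ℝ≥0∞} {ψ : Vec d → ℝ≥0∞} {H : Set (Vec k)} {R : Set (Vec d)}

theorem ell2t_ne_top_iff (y : Vec d) (W : Mat d k) (h : Vec k) (r : Vec d) :
    ell2t φ ψ y W h r ≠ ⊤ ↔ φ h ≠ ⊤ ∧ ψ r ≠ ⊤ := by
  simp [ell2t]

theorem toReal_ell2t (p : Vec d × Mat d k) {z : Vec k × Vec d} (hφ : φ z.1 ≠ ⊤) (hψ : ψ z.2 ≠ ⊤) :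
    (ell2t φ ψ p.1 p.2 z.1 z.2).toReal =
      leastSquaresLoss (matMulVecBilin d k) p z + ((φ z.1).toReal + (ψ z.2).toReal) := by
  rw [ell2t, ENNReal.toReal_add (by finiteness) hψ, ENNReal.toReal_add (by finiteness) hφ,
    ENNReal.toReal_ofReal (by positivity), add_assoc, leastSquaresLoss, bilinResidual,
    bilinResidualFDeriv_apply, matMulVecBilin_apply]

theorem strongConvexOn_toReal_ell2t {ν : ℝ} (hν : 0 ≤ ν) (hH : Convex ℝ H) (hR : Convex ℝ R)
    {y : Vec d} {W : Mat d k}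
    (hsc : ∀ h₁ ∈ H, ∀ h₂ ∈ H, ∀ r₁ ∈ R, ∀ r₂ ∈ R, ∀ a b : ℝ, 0 ≤ a → 0 ≤ b → a + b = 1 →
      ell2t φ ψ y W (a • h₁ + b • h₂) (a • r₁ + b • r₂)
          + ENNReal.ofReal (ν / 2 * (a * b) * (‖h₁ - h₂‖ ^ 2 + ‖r₁ - r₂‖ ^ 2))
        ≤ ENNReal.ofReal a * ell2t φ ψ y W h₁ r₁ + ENNReal.ofReal b * ell2t φ ψ y W h₂ r₂) :
    StrongConvexOn (feasibleSet φ ψ H R) ν fun z => (ell2t φ ψ y W z.1 z.2).toReal := by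
  -- `Vec k × Vec d` carries the sup norm, which the Euclidean norm of the pair dominates.
  have norm_sq_le : ∀ z : Vec k × Vec d, ‖z‖ ^ 2 ≤ ‖z.1‖ ^ 2 + ‖z.2‖ ^ 2 := fun z => by
    rcases Prod.norm_def z ▸ max_choice ‖z.1‖ ‖z.2‖ with hz | hz <;> rw [hz]
    exacts [le_add_of_nonneg_right (sq_nonneg _), le_add_of_nonneg_left (sq_nonneg _)]
  simp only [feasibleSet, ← ell2t_ne_top_iff y W]
  refine strongConvexOn_toReal (hH.prod hR) hν fun x hx z hz a b ha hb hab => ?_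
  refine le_trans ?_ (hsc x.1 hx.1 z.1 hz.1 x.2 hx.2 z.2 hz.2 a b ha hb hab)
  gcongr
  exacts [le_rfl, norm_sq_le (x - z)]

theorem hasFDerivAt_toReal_ell2t_minimizer {ν : ℝ} {ζ : Vec d × Mat d k → Vec k × Vec d}
    (hν : 0 < ν)
    (hsc : ∀ p : Vec d × Mat d k,
      StrongConvexOn (feasibleSet φ ψ H R) ν fun z => (ell2t φ ψ p.1 p.2 z.1 z.2).toReal)
    (hζ : ∀ p, ζ p ∈ feasibleSet φ ψ H R)
    (hmin : ∀ p, IsMinOn (fun z => ell2t φ ψ p.1 p.2 z.1 z.2) (feasibleSet φ ψ H R) (ζ p))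
    (p : Vec d × Mat d k) :
    HasFDerivAt (fun p => (ell2t φ ψ p.1 p.2 (ζ p).1 (ζ p).2).toReal)
      (leastSquaresLossFDeriv (matMulVecBilin d k) p (ζ p)) p :=
  hasFDerivAt_min_leastSquaresLoss_add (matMulVecBilin d k) hν
    (fun p _ hz => toReal_ell2t p hz.2.1 hz.2.2) hsc hζ
    (fun p _ hz => ENNReal.toReal_mono ((ell2t_ne_top_iff _ _ _ _).2 hz.2) (hmin p hz)) p

end Ell2

theorem ell2_differentiable_and_gradient_general {d k : ℕ}
    (φ : Vec k → ℝ≥0∞) (ψ : Vec d → ℝ≥0∞)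
    (H : Set (Vec k)) (R : Set (Vec d)) (ν : ℝ) (hν : 0 < ν)
    (hHconv : Convex ℝ H) (hRconv : Convex ℝ R)
    (hsc : ∀ (y : Vec d) (W : Mat d k), ∀ h₁ ∈ H, ∀ h₂ ∈ H, ∀ r₁ ∈ R, ∀ r₂ ∈ R,
      ∀ a b : ℝ, 0 ≤ a → 0 ≤ b → a + b = 1 →
        ell2t φ ψ y W (a • h₁ + b • h₂) (a • r₁ + b • r₂)
            + ENNReal.ofReal (ν / 2 * (a * b) * (‖h₁ - h₂‖ ^ 2 + ‖r₁ - r₂‖ ^ 2))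
          ≤ ENNReal.ofReal a * ell2t φ ψ y W h₁ r₁ + ENNReal.ofReal b * ell2t φ ψ y W h₂ r₂)
    (hstar : Vec d → Mat d k → Vec k) (rstar : Vec d → Mat d k → Vec d)
    (hstar_mem : ∀ y W, hstar y W ∈ H) (rstar_mem : ∀ y W, rstar y W ∈ R)
    (hmin : ∀ (y : Vec d) (W : Mat d k), ∀ h ∈ H, ∀ r ∈ R,
        ell2t φ ψ y W (hstar y W) (rstar y W) ≤ ell2t φ ψ y W h r)
    (hfin : ∀ (y : Vec d) (W : Mat d k), ell2t φ ψ y W (hstar y W) (rstar y W) ≠ ⊤) :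
    Differentiable ℝ (fun p : Vec d × Mat d k =>
        (ell2t φ ψ p.1 p.2 (hstar p.1 p.2) (rstar p.1 p.2)).toReal)
    ∧ ∀ (y : Vec d) (W : Mat d k),
        HasGradientAt (fun W' => (ell2t φ ψ y W' (hstar y W') (rstar y W')).toReal)
          (gradFormula y W (hstar y W) (rstar y W)) W := by
  have hderiv := hasFDerivAt_toReal_ell2t_minimizer (φ := φ) (ψ := ψ)
    (ζ := fun p => (hstar p.1 p.2, rstar p.1 p.2)) hν
    (fun p => strongConvexOn_toReal_ell2t hν.le hHconv hRconv (hsc p.1 p.2))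
    (fun p => ⟨⟨hstar_mem _ _, rstar_mem _ _⟩, (ell2t_ne_top_iff _ _ _ _).1 (hfin p.1 p.2)⟩)
    (fun p z hz => hmin p.1 p.2 z.1 hz.1.1 z.2 hz.1.2)
  exact ⟨fun p => (hderiv p).differentiableAt,
    fun y W => hasGradientAt_of_hasFDerivAt_leastSquaresLossFDeriv (hderiv (y, W))⟩

/-- Smoothness of ℓ₂: differentiability and gradient formula.
The loss `ℓ₂(y,W) = min_{h∈H, r∈R} ℓ̃₂(y,W,h,r)` is differentiable on `ℝ^d × ℝ^{d×k}`,
and its partial gradient w.r.t. `W` is `(W h*(y,W) + r*(y,W) − y) h*(y,W)ᵀ`. -/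
theorem ell2_differentiable_and_gradient {d k : ℕ}
    (φ : Vec k → ℝ≥0∞) (ϕ' : Vec d → ℝ≥0∞)
    (H : Set (Vec k)) (R : Set (Vec d)) (ν : ℝ) (hν : 0 < ν)
    (hφconv : ConvexFnENN φ) (hφproper : ∃ h, φ h ≠ ⊤) (hφclosed : LowerSemicontinuous φ)
    (hϕconv : ConvexFnENN ϕ') (hϕproper : ∃ r, ϕ' r ≠ ⊤) (hϕclosed : LowerSemicontinuous ϕ')
    (hHne : H.Nonempty) (hHconv : Convex ℝ H) (hHcomp : IsCompact H)
    (hRne : R.Nonempty) (hRconv : Convex ℝ R) (hRcomp : IsCompact R)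
    -- joint ν-strong convexity of `ℓ̃₂(y, W, ·, ·)` on `H × R`
    (hsc : ∀ (y : Vec d) (W : Mat d k), ∀ h₁ ∈ H, ∀ h₂ ∈ H, ∀ r₁ ∈ R, ∀ r₂ ∈ R,
      ∀ a b : ℝ, 0 ≤ a → 0 ≤ b → a + b = 1 →
        ell2t φ ϕ' y W (a • h₁ + b • h₂) (a • r₁ + b • r₂)
            + ENNReal.ofReal (ν / 2 * (a * b) * (‖h₁ - h₂‖ ^ 2 + ‖r₁ - r₂‖ ^ 2))
          ≤ ENNReal.ofReal a * ell2t φ ϕ' y W h₁ r₁ + ENNReal.ofReal b * ell2t φ ϕ' y W h₂ r₂)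
    -- `(hstar y W, rstar y W)` is the (unique) minimizer of `ℓ̃₂(y, W, ·, ·)` over `H × R`
    (hstar : Vec d → Mat d k → Vec k) (rstar : Vec d → Mat d k → Vec d)
    (hstar_mem : ∀ y W, hstar y W ∈ H) (rstar_mem : ∀ y W, rstar y W ∈ R)
    (hmin : ∀ (y : Vec d) (W : Mat d k), ∀ h ∈ H, ∀ r ∈ R,
        ell2t φ ϕ' y W (hstar y W) (rstar y W) ≤ ell2t φ ϕ' y W h r)
    (huniq : ∀ (y : Vec d) (W : Mat d k), ∀ h ∈ H, ∀ r ∈ R,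
        (∀ h' ∈ H, ∀ r' ∈ R, ell2t φ ϕ' y W h r ≤ ell2t φ ϕ' y W h' r') →
        h = hstar y W ∧ r = rstar y W)
    -- the minimum value is finite
    (hfin : ∀ (y : Vec d) (W : Mat d k), ell2t φ ϕ' y W (hstar y W) (rstar y W) ≠ ⊤) :
    Differentiable ℝ (fun p : Vec d × Mat d k =>
        (ell2t φ ϕ' p.1 p.2 (hstar p.1 p.2) (rstar p.1 p.2)).toReal)
    ∧ ∀ (y : Vec d) (W : Mat d k),
        HasGradientAt (fun W' => (ell2t φ ϕ' y W' (hstar y W') (rstar y W')).toReal)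
          (gradFormula y W (hstar y W) (rstar y W)) W := by
  exact ell2_differentiable_and_gradient_general φ ϕ' H R ν hν hHconv hRconv hsc hstar rstar
    hstar_mem rstar_mem hmin hfin
end
end

section
/- There exists a constant c > 0 such that for all y₁, y₂ ∈ Y and all W₁, W₂ ∈ C, max{‖h*(y₁,W₁) − h*(y₂,W₂)‖₂, ‖r*(y₁,W₁) − r*(y₂,W₂)‖₂} ≤ c ( ‖y₁ − y₂‖₂ + ‖W₁ − W₂‖_F ); that is, the minimizer map (y,W) ↦ (h*(y,W), r*(y,W)) is Lipschitz on Y × C. -/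
open scoped RealInnerProductSpace ENNReal

noncomputable section

/-!
If two strongly convex objectives `qᵢ + g` with the same regularizer `g` have minimizers `x₁`, `x₂`,
adding the two quadratic growth inequalities cancels `g` and gives
`ν ‖x₁ - x₂‖² ≤ (q₁ - q₂)(x₂) - (q₁ - q₂)(x₁)`. For `qᵢ x = ‖yᵢ - Lᵢ x‖² / 2`, polarization
writes `q₁ - q₂` as half the inner product of the difference and the sum of the residuals, so on
bounded sets it is Lipschitz with a constant proportional to `‖y₁ - y₂‖ + ‖L₁ - L₂‖`. The minimizers
stay in a bounded set by quadratic growth from a fixed point of finite objective. The theorem is the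
case `x = (h, r)`, `L x = W h + r`.
-/

section StrongConvexity

variable {X : Type*} [NormedAddCommGroup X] [NormedSpace ℝ X] {S : Set X} {m : ℝ}

/-- Strong convexity with modulus `m` on `S` for functions with values in `[0,∞]`: the analogue of
`StrongConvexOn`, which needs a real-valued function. As there, `S` itself is required to be
convex. -/
def StrongConvexOnENN (S : Set X) (m : ℝ) (f : X → ℝ≥0∞) : Prop :=
  Convex ℝ S ∧ ∀ x ∈ S, ∀ y ∈ S, ∀ a b : ℝ, 0 ≤ a → 0 ≤ b → a + b = 1 →
    f (a • x + b • y) + ENNReal.ofReal (m / 2 * (a * b) * ‖x - y‖ ^ 2)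
      ≤ ENNReal.ofReal a * f x + ENNReal.ofReal b * f y

lemma StrongConvexOnENN.add_sq_norm_sub_le_of_isMinOn {f : X → ℝ≥0∞} {x y : X}
    (hf : StrongConvexOnENN S m f) (hx : x ∈ S) (hy : y ∈ S) (hmin : IsMinOn f S x) :
    f x + ENNReal.ofReal (m / 2 * ‖x - y‖ ^ 2) ≤ f y := by
  obtain hfy | hfy := eq_or_ne (f y) ⊤
  · exact hfy ▸ le_top
  have hfx : f x ≠ ⊤ := ne_top_of_le_ne_top hfy (hmin hy)
  have hsegment : ∀ a ∈ Set.Ioo (0 : ℝ) 1,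
      f x + ENNReal.ofReal (m / 2 * a * ‖x - y‖ ^ 2) ≤ f y := by
    rintro a ⟨ha₀, ha₁⟩
    have hb : 0 < 1 - a := sub_pos.2 ha₁
    have hab : a + (1 - a) = 1 := add_sub_cancel a 1
    rw [← ENNReal.mul_le_mul_iff_right (ENNReal.ofReal_pos.2 hb).ne' ENNReal.ofReal_ne_top,
      ← ENNReal.add_le_add_iff_left (ENNReal.mul_ne_top (ENNReal.ofReal_ne_top (r := a)) hfx)]
    calc ENNReal.ofReal a * f x
          + ENNReal.ofReal (1 - a) * (f x + ENNReal.ofReal (m / 2 * a * ‖x - y‖ ^ 2))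
        = f x + ENNReal.ofReal (m / 2 * (a * (1 - a)) * ‖x - y‖ ^ 2) := by
          rw [mul_add, ← add_assoc, ← add_mul, ← ENNReal.ofReal_add ha₀.le hb.le, hab,
            ENNReal.ofReal_one, one_mul, ← ENNReal.ofReal_mul hb.le]
          ring_nf
      _ ≤ f (a • x + (1 - a) • y) + ENNReal.ofReal (m / 2 * (a * (1 - a)) * ‖x - y‖ ^ 2) := by
          gcongr
          exact hmin (hf.1 hx hy ha₀.le hb.le hab)
      _ ≤ ENNReal.ofReal a * f x + ENNReal.ofReal (1 - a) * f y :=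
          hf.2 x hx y hy a (1 - a) ha₀.le hb.le hab
  have hcont : Continuous fun a : ℝ ↦ f x + ENNReal.ofReal (m / 2 * a * ‖x - y‖ ^ 2) := by
    have := ENNReal.continuous_ofReal
    fun_prop
  have hlim := (hcont.tendsto 1).mono_left (nhdsWithin_le_nhds (s := Set.Iio 1))
  rw [mul_one] at hlim
  exact le_of_tendsto hlim (Filter.mem_of_superset (Ioo_mem_nhdsLT zero_lt_one) hsegment)

lemma StrongConvexOnENN.of_prod {F E : Type*} [NormedAddCommGroup F] [NormedSpace ℝ F]
    [NormedAddCommGroup E] [NormedSpace ℝ E] {H : Set F} {R : Set E} (hm : 0 ≤ m)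
    (hH : Convex ℝ H) (hR : Convex ℝ R) {f : F → E → ℝ≥0∞}
    (hf : ∀ h₁ ∈ H, ∀ h₂ ∈ H, ∀ r₁ ∈ R, ∀ r₂ ∈ R, ∀ a b : ℝ, 0 ≤ a → 0 ≤ b → a + b = 1 →
      f (a • h₁ + b • h₂) (a • r₁ + b • r₂)
          + ENNReal.ofReal (m / 2 * (a * b) * (‖h₁ - h₂‖ ^ 2 + ‖r₁ - r₂‖ ^ 2))
        ≤ ENNReal.ofReal a * f h₁ r₁ + ENNReal.ofReal b * f h₂ r₂) :
    StrongConvexOnENN (H ×ˢ R) m fun p ↦ f p.1 p.2 := by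
  refine ⟨hH.prod hR, ?_⟩
  rintro ⟨h₁, r₁⟩ ⟨hh₁, hr₁⟩ ⟨h₂, r₂⟩ ⟨hh₂, hr₂⟩ a b ha hb hab
  have hnorm : ‖(h₁, r₁) - (h₂, r₂)‖ ^ 2 ≤ ‖h₁ - h₂‖ ^ 2 + ‖r₁ - r₂‖ ^ 2 := by
    rw [Prod.mk_sub_mk, Prod.norm_mk]
    rcases max_choice ‖h₁ - h₂‖ ‖r₁ - r₂‖ with h | h <;> rw [h] <;>
      simp only [le_add_iff_nonneg_left, le_add_iff_nonneg_right, sq_nonneg]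
  refine le_trans ?_ (hf h₁ hh₁ h₂ hh₂ r₁ hr₁ r₂ hr₂ a b ha hb hab)
  simp only [Prod.smul_mk, Prod.mk_add_mk]
  gcongr

lemma ne_top_of_isMinOn_ofReal_add {α : Type*} {s : Set α} {q : α → ℝ} {g : α → ℝ≥0∞} {x y : α}
    (hmin : IsMinOn (fun z ↦ ENNReal.ofReal (q z) + g z) s x) (hy : y ∈ s) (hgy : g y ≠ ⊤) :
    g x ≠ ⊤ :=
  ne_top_of_le_ne_top (ENNReal.add_ne_top.2 ⟨ENNReal.ofReal_ne_top, hgy⟩)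
    (le_add_self.trans (hmin hy))

variable {g : X → ℝ≥0∞}

lemma StrongConvexOnENN.toReal_add_sq_norm_sub_le_of_isMinOn {q : X → ℝ} {x y : X}
    (hm : 0 ≤ m) (hq : ∀ z, 0 ≤ q z) (hf : StrongConvexOnENN S m fun z ↦ ENNReal.ofReal (q z) + g z)
    (hx : x ∈ S) (hmin : IsMinOn (fun z ↦ ENNReal.ofReal (q z) + g z) S x)
    (hy : y ∈ S) (hgy : g y ≠ ⊤) :
    q x + (g x).toReal + m / 2 * ‖x - y‖ ^ 2 ≤ q y + (g y).toReal := by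
  have hgx : g x ≠ ⊤ := ne_top_of_isMinOn_ofReal_add hmin hy hgy
  have hqx := hq x
  have hqy := hq y
  have hgrowth := hf.add_sq_norm_sub_le_of_isMinOn hx hy hmin
  rwa [← ENNReal.ofReal_toReal hgx, ← ENNReal.ofReal_toReal hgy,
    ← ENNReal.ofReal_add hqx ENNReal.toReal_nonneg, ← ENNReal.ofReal_add hqy ENNReal.toReal_nonneg,
    ← ENNReal.ofReal_add (by positivity) (by positivity),
    ENNReal.ofReal_le_ofReal_iff (by positivity)] at hgrowth

lemma StrongConvexOnENN.mul_sq_norm_sub_le_of_isMinOn {q₁ q₂ : X → ℝ} {x₁ x₂ : X} (hm : 0 ≤ m)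
    (hq₁ : ∀ z, 0 ≤ q₁ z) (hq₂ : ∀ z, 0 ≤ q₂ z)
    (hf₁ : StrongConvexOnENN S m fun z ↦ ENNReal.ofReal (q₁ z) + g z)
    (hf₂ : StrongConvexOnENN S m fun z ↦ ENNReal.ofReal (q₂ z) + g z)
    (hx₁ : x₁ ∈ S) (hmin₁ : IsMinOn (fun z ↦ ENNReal.ofReal (q₁ z) + g z) S x₁)
    (hx₂ : x₂ ∈ S) (hmin₂ : IsMinOn (fun z ↦ ENNReal.ofReal (q₂ z) + g z) S x₂)
    (hg : g x₁ ≠ ⊤) :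
    m * ‖x₁ - x₂‖ ^ 2 ≤ (q₁ x₂ - q₂ x₂) - (q₁ x₁ - q₂ x₁) := by
  have hg₂ : g x₂ ≠ ⊤ := ne_top_of_isMinOn_ofReal_add hmin₂ hx₁ hg
  have h₁ := hf₁.toReal_add_sq_norm_sub_le_of_isMinOn hm hq₁ hx₁ hmin₁ hx₂ hg₂
  have h₂ := hf₂.toReal_add_sq_norm_sub_le_of_isMinOn hm hq₂ hx₂ hmin₂ hx₁ hg
  rw [norm_sub_rev] at h₂
  linarith

end StrongConvexity

section RegularizedLeastSquares

variable {X E : Type*} [NormedAddCommGroup X] [NormedSpace ℝ X]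
  [NormedAddCommGroup E] [NormedSpace ℝ E] {S : Set X} {g : X → ℝ≥0∞} {ν : ℝ}

/-- The regularized least-squares objective `(1/2)‖y − L x‖² + g(x)`. An extended-valued `g` also
encodes constraints on `x`. -/
def regLeastSquares (g : X → ℝ≥0∞) (y : E) (L : X →L[ℝ] E) (x : X) : ℝ≥0∞ :=
  ENNReal.ofReal (‖y - L x‖ ^ 2 / 2) + g x

lemma norm_sub_clm_apply_le (y : E) (L : X →L[ℝ] E) (x : X) :
    ‖y - L x‖ ≤ ‖y‖ + ‖L‖ * ‖x‖ :=
  (norm_sub_le _ _).trans (by gcongr; exact L.le_opNorm x)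

lemma exists_norm_le_of_isMinOn_regLeastSquares (hν : 0 < ν) (M : ℝ) {x₀ : X} (hx₀ : x₀ ∈ S)
    (hg : g x₀ ≠ ⊤) :
    ∃ ρ, 0 ≤ ρ ∧ ∀ (y : E) (L : X →L[ℝ] E) (x : X), ‖y‖ ≤ M → ‖L‖ ≤ M →
      StrongConvexOnENN S ν (regLeastSquares g y L) → x ∈ S →
      IsMinOn (regLeastSquares g y L) S x → ‖x‖ ≤ ρ := by
  refine ⟨‖x₀‖ + √(2 / ν * ((M + M * ‖x₀‖) ^ 2 / 2 + (g x₀).toReal)), by positivity, ?_⟩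
  intro y L x hy hL hsc hx hmin
  have hgrowth := hsc.toReal_add_sq_norm_sub_le_of_isMinOn hν.le (fun z ↦ by positivity)
    hx hmin hx₀ hg
  have hvalue : ‖y - L x₀‖ ^ 2 / 2 ≤ (M + M * ‖x₀‖) ^ 2 / 2 := by
    gcongr
    exact (norm_sub_clm_apply_le y L x₀).trans (by gcongr)
  have hdist : ‖x - x₀‖ ≤ √(2 / ν * ((M + M * ‖x₀‖) ^ 2 / 2 + (g x₀).toReal)) := by
    refine Real.le_sqrt_of_sq_le ?_
    rw [div_mul_eq_mul_div, le_div_iff₀ hν]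
    have : 0 ≤ ‖y - L x‖ ^ 2 / 2 + (g x).toReal := by positivity
    linarith
  exact (norm_le_norm_add_norm_sub' x x₀).trans (by gcongr)

end RegularizedLeastSquares

section LipschitzArgmin

variable {X E : Type*} [NormedAddCommGroup X] [NormedSpace ℝ X]
  [NormedAddCommGroup E] [InnerProductSpace ℝ E] {S : Set X} {g : X → ℝ≥0∞} {ν M : ℝ}

lemma half_sq_norm_sub_sub_half_sq_norm_sub_le (u₁ u₂ v₁ v₂ : E) :
    (‖u₂‖ ^ 2 / 2 - ‖v₂‖ ^ 2 / 2) - (‖u₁‖ ^ 2 / 2 - ‖v₁‖ ^ 2 / 2)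
      ≤ (‖(u₂ - v₂) - (u₁ - v₁)‖ * ‖u₂ + v₂‖ + ‖u₁ - v₁‖ * ‖(u₂ + v₂) - (u₁ + v₁)‖) / 2 := by
  have hpolar : (‖u₂‖ ^ 2 / 2 - ‖v₂‖ ^ 2 / 2) - (‖u₁‖ ^ 2 / 2 - ‖v₁‖ ^ 2 / 2)
      = (⟪(u₂ - v₂) - (u₁ - v₁), u₂ + v₂⟫ + ⟪u₁ - v₁, (u₂ + v₂) - (u₁ + v₁)⟫) / 2 := by
    simp only [← real_inner_self_eq_norm_sq, inner_sub_left, inner_sub_right, inner_add_right]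
    rw [real_inner_comm u₂ v₂, real_inner_comm u₁ v₁]
    ring
  rw [hpolar]
  gcongr <;> exact real_inner_le_norm _ _

lemma half_sq_norm_residual_sub_le {y₁ y₂ : E} {L₁ L₂ : X →L[ℝ] E} {x₁ x₂ : X} {ρ : ℝ}
    (hy₁ : ‖y₁‖ ≤ M) (hy₂ : ‖y₂‖ ≤ M) (hL₁ : ‖L₁‖ ≤ M) (hL₂ : ‖L₂‖ ≤ M)
    (hx₁ : ‖x₁‖ ≤ ρ) (hx₂ : ‖x₂‖ ≤ ρ) :
    (‖y₁ - L₁ x₂‖ ^ 2 / 2 - ‖y₂ - L₂ x₂‖ ^ 2 / 2)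
        - (‖y₁ - L₁ x₁‖ ^ 2 / 2 - ‖y₂ - L₂ x₁‖ ^ 2 / 2)
      ≤ M * (1 + 2 * ρ) * (‖y₁ - y₂‖ + ‖L₁ - L₂‖) * ‖x₁ - x₂‖ := by
  have hM : 0 ≤ M := (norm_nonneg y₁).trans hy₁
  have hρ : 0 ≤ ρ := (norm_nonneg x₁).trans hx₁
  have hdiff (x : X) : (y₁ - L₁ x) - (y₂ - L₂ x) = (y₁ - y₂) - (L₁ - L₂) x := by
    rw [sub_apply]; abel
  have hsum (x : X) : (y₁ - L₁ x) + (y₂ - L₂ x) = (y₁ + y₂) - (L₁ + L₂) x := by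
    rw [add_apply]; abel
  have hy : ‖y₁ + y₂‖ ≤ 2 * M := (norm_add_le _ _).trans (by linarith)
  have hL : ‖L₁ + L₂‖ ≤ 2 * M := (norm_add_le _ _).trans (by linarith)
  have hdiff_norm : ‖(y₁ - y₂) - (L₁ - L₂) x₁‖ ≤ ‖y₁ - y₂‖ + ‖L₁ - L₂‖ * ρ :=
    (norm_sub_clm_apply_le _ _ _).trans (by gcongr)
  have hsum_norm : ‖(y₁ + y₂) - (L₁ + L₂) x₂‖ ≤ 2 * M + 2 * M * ρ :=
    (norm_sub_clm_apply_le _ _ _).trans (by gcongr)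
  have hdiff_lip : ‖(L₁ - L₂) (x₁ - x₂)‖ ≤ ‖L₁ - L₂‖ * ‖x₁ - x₂‖ := (L₁ - L₂).le_opNorm _
  have hsum_lip : ‖(L₁ + L₂) (x₁ - x₂)‖ ≤ 2 * M * ‖x₁ - x₂‖ := (L₁ + L₂).le_of_opNorm_le hL _
  refine (half_sq_norm_sub_sub_half_sq_norm_sub_le _ _ _ _).trans ?_
  simp only [hdiff, hsum, sub_sub_sub_cancel_left, ← map_sub]
  calc _ ≤ (‖L₁ - L₂‖ * ‖x₁ - x₂‖ * (2 * M + 2 * M * ρ)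
          + (‖y₁ - y₂‖ + ‖L₁ - L₂‖ * ρ) * (2 * M * ‖x₁ - x₂‖)) / 2 := by gcongr
    _ = M * ‖x₁ - x₂‖ * (‖y₁ - y₂‖ + (1 + 2 * ρ) * ‖L₁ - L₂‖) := by ring
    _ ≤ M * ‖x₁ - x₂‖ * ((1 + 2 * ρ) * ‖y₁ - y₂‖ + (1 + 2 * ρ) * ‖L₁ - L₂‖) := by
        gcongr
        exact le_mul_of_one_le_left (norm_nonneg _) (by linarith)
    _ = _ := by ring

lemma norm_sub_le_of_isMinOn_regLeastSquares {y₁ y₂ : E} {L₁ L₂ : X →L[ℝ] E} {x₁ x₂ : X} {ρ : ℝ}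
    (hν : 0 < ν) (hsc₁ : StrongConvexOnENN S ν (regLeastSquares g y₁ L₁))
    (hsc₂ : StrongConvexOnENN S ν (regLeastSquares g y₂ L₂))
    (hx₁ : x₁ ∈ S) (hmin₁ : IsMinOn (regLeastSquares g y₁ L₁) S x₁)
    (hx₂ : x₂ ∈ S) (hmin₂ : IsMinOn (regLeastSquares g y₂ L₂) S x₂) (hg : g x₁ ≠ ⊤)
    (hy₁ : ‖y₁‖ ≤ M) (hy₂ : ‖y₂‖ ≤ M) (hL₁ : ‖L₁‖ ≤ M) (hL₂ : ‖L₂‖ ≤ M)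
    (hρ₁ : ‖x₁‖ ≤ ρ) (hρ₂ : ‖x₂‖ ≤ ρ) :
    ‖x₁ - x₂‖ ≤ M * (1 + 2 * ρ) / ν * (‖y₁ - y₂‖ + ‖L₁ - L₂‖) := by
  have hM : 0 ≤ M := (norm_nonneg y₁).trans hy₁
  have hρ : 0 ≤ ρ := (norm_nonneg x₁).trans hρ₁
  have hquad : ν * ‖x₁ - x₂‖ ^ 2
      ≤ M * (1 + 2 * ρ) * (‖y₁ - y₂‖ + ‖L₁ - L₂‖) * ‖x₁ - x₂‖ :=
    (hsc₁.mul_sq_norm_sub_le_of_isMinOn hν.le (fun z ↦ by positivity) (fun z ↦ by positivity)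
      hsc₂ hx₁ hmin₁ hx₂ hmin₂ hg).trans
      (half_sq_norm_residual_sub_le hy₁ hy₂ hL₁ hL₂ hρ₁ hρ₂)
  rw [div_mul_eq_mul_div, le_div_iff₀' hν]
  obtain h | h := (norm_nonneg (x₁ - x₂)).eq_or_lt
  · rw [← h, mul_zero]
    positivity
  · exact le_of_mul_le_mul_right (by rwa [mul_assoc, ← sq]) h

theorem exists_norm_argmin_regLeastSquares_sub_le {Θ : Type*} {y : Θ → E} {L : Θ → X →L[ℝ] E}
    {x : Θ → X} (hν : 0 < ν) (hy : Bornology.IsBounded (Set.range y))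
    (hL : Bornology.IsBounded (Set.range L))
    (hsc : ∀ t, StrongConvexOnENN S ν (regLeastSquares g (y t) (L t)))
    (hx : ∀ t, x t ∈ S) (hmin : ∀ t, IsMinOn (regLeastSquares g (y t) (L t)) S (x t))
    (huniq : ∀ t, ∀ z ∈ S, IsMinOn (regLeastSquares g (y t) (L t)) S z → z = x t) :
    ∃ c, 0 < c ∧ ∀ s t, ‖x s - x t‖ ≤ c * (‖y s - y t‖ + ‖L s - L t‖) := by
  by_cases hfin : ∃ x₀ ∈ S, g x₀ ≠ ⊤
  · obtain ⟨x₀, hx₀, hg⟩ := hfin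
    obtain ⟨K, hK, hyK⟩ := hy.exists_pos_norm_le
    obtain ⟨K', -, hLK'⟩ := hL.exists_pos_norm_le
    have hyM (t : Θ) : ‖y t‖ ≤ max K K' := le_max_of_le_left (hyK _ ⟨t, rfl⟩)
    have hLM (t : Θ) : ‖L t‖ ≤ max K K' := le_max_of_le_right (hLK' _ ⟨t, rfl⟩)
    obtain ⟨ρ, hρ, hbound⟩ :=
      exists_norm_le_of_isMinOn_regLeastSquares (E := E) hν (max K K') hx₀ hg
    have hxρ (t : Θ) : ‖x t‖ ≤ ρ := hbound _ _ _ (hyM t) (hLM t) (hsc t) (hx t) (hmin t)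
    refine ⟨max K K' * (1 + 2 * ρ) / ν, by positivity, fun s t ↦ ?_⟩
    exact norm_sub_le_of_isMinOn_regLeastSquares hν (hsc s) (hsc t) (hx s) (hmin s) (hx t) (hmin t)
      (ne_top_of_isMinOn_ofReal_add (hmin s) hx₀ hg) (hyM s) (hyM t) (hLM s) (hLM t) (hxρ s) (hxρ t)
  -- The objectives are all `∞` on `S`, so every point of `S` is a minimizer of each of them.
  · push Not at hfin
    refine ⟨1, one_pos, fun s t ↦ ?_⟩
    have hmin_s : IsMinOn (regLeastSquares g (y t) (L t)) S (x s) := fun z hz ↦ by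
      simp [regLeastSquares, hfin z hz]
    rw [huniq t (x s) (hx s) hmin_s, sub_self, norm_zero]
    positivity

end LipschitzArgmin

section RobustLoss

variable {𝒲 F E : Type*} [NormedAddCommGroup 𝒲] [NormedSpace ℝ 𝒲] [NormedAddCommGroup F]
  [NormedSpace ℝ F] [NormedAddCommGroup E] [NormedSpace ℝ E]

lemma lipschitzWith_coprod_id (B : 𝒲 →L[ℝ] F →L[ℝ] E) :
    LipschitzWith ‖B‖₊ fun W ↦ (B W).coprod (ContinuousLinearMap.id ℝ E) := by
  refine LipschitzWith.of_dist_le_mul fun W₁ W₂ ↦ ?_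
  rw [dist_eq_norm, dist_eq_norm, coe_nnnorm]
  refine ContinuousLinearMap.opNorm_le_bound _ (by positivity) fun p ↦ ?_
  calc ‖((B W₁).coprod (.id ℝ E) - (B W₂).coprod (.id ℝ E)) p‖
      = ‖B (W₁ - W₂) p.1‖ := by simp
    _ ≤ ‖B‖ * ‖W₁ - W₂‖ * ‖p.1‖ := B.le_opNorm₂ _ _
    _ ≤ ‖B‖ * ‖W₁ - W₂‖ * ‖p‖ := by gcongr; exact norm_fst_le p

/-- The loss `(1/2)‖y − B(W, h) − r‖² + φ(h) + ψ(r)` of a coefficient `h` and an outlier `r`, where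
a bounded bilinear map `B` plays the role of the product of a dictionary and a coefficient. It
specializes to `ell2t`. -/
def robustLoss (B : 𝒲 →L[ℝ] F →L[ℝ] E) (φ : F → ℝ≥0∞) (ψ : E → ℝ≥0∞)
    (y : E) (W : 𝒲) (h : F) (r : E) : ℝ≥0∞ :=
  ENNReal.ofReal (‖y - B W h - r‖ ^ 2 / 2) + φ h + ψ r

lemma robustLoss_eq_regLeastSquares (B : 𝒲 →L[ℝ] F →L[ℝ] E) (φ : F → ℝ≥0∞) (ψ : E → ℝ≥0∞)
    (y : E) (W : 𝒲) :
    (fun p : F × E ↦ robustLoss B φ ψ y W p.1 p.2)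
      = regLeastSquares (fun p ↦ φ p.1 + ψ p.2) y ((B W).coprod (.id ℝ E)) := by
  funext p
  simp [robustLoss, regLeastSquares, sub_sub, add_assoc]

lemma isMinOn_regLeastSquares_coprod_id_iff {B : 𝒲 →L[ℝ] F →L[ℝ] E} {φ : F → ℝ≥0∞}
    {ψ : E → ℝ≥0∞} {H : Set F} {R : Set E} {y : E} {W : 𝒲} {h : F} {r : E} :
    IsMinOn (regLeastSquares (fun p ↦ φ p.1 + ψ p.2) y ((B W).coprod (.id ℝ E))) (H ×ˢ R) (h, r) ↔
      ∀ h' ∈ H, ∀ r' ∈ R, robustLoss B φ ψ y W h r ≤ robustLoss B φ ψ y W h' r' := by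
  rw [← robustLoss_eq_regLeastSquares, isMinOn_iff]
  exact ⟨fun H' h' hh r' hr ↦ H' (h', r') ⟨hh, hr⟩, fun H' p hp ↦ H' p.1 hp.1 p.2 hp.2⟩

end RobustLoss

theorem minimizer_map_lipschitz_general {𝒲 F E : Type*} [NormedAddCommGroup 𝒲] [NormedSpace ℝ 𝒲]
    [NormedAddCommGroup F] [NormedSpace ℝ F] [NormedAddCommGroup E] [InnerProductSpace ℝ E]
    (B : 𝒲 →L[ℝ] F →L[ℝ] E) {φ : F → ℝ≥0∞} {ψ : E → ℝ≥0∞} {H : Set F} {R : Set E} {ν : ℝ}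
    (hν : 0 < ν) (hH : Convex ℝ H) (hR : Convex ℝ R)
    {Y : Set E} (hY : Bornology.IsBounded Y) {C : Set 𝒲} (hC : Bornology.IsBounded C)
    (hsc : ∀ y ∈ Y, ∀ W ∈ C, ∀ h₁ ∈ H, ∀ h₂ ∈ H, ∀ r₁ ∈ R, ∀ r₂ ∈ R,
      ∀ a b : ℝ, 0 ≤ a → 0 ≤ b → a + b = 1 →
        robustLoss B φ ψ y W (a • h₁ + b • h₂) (a • r₁ + b • r₂)
            + ENNReal.ofReal (ν / 2 * (a * b) * (‖h₁ - h₂‖ ^ 2 + ‖r₁ - r₂‖ ^ 2))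
          ≤ ENNReal.ofReal a * robustLoss B φ ψ y W h₁ r₁
            + ENNReal.ofReal b * robustLoss B φ ψ y W h₂ r₂)
    {hstar : E → 𝒲 → F} {rstar : E → 𝒲 → E}
    (hstar_mem : ∀ y ∈ Y, ∀ W ∈ C, hstar y W ∈ H) (rstar_mem : ∀ y ∈ Y, ∀ W ∈ C, rstar y W ∈ R)
    (hmin : ∀ y ∈ Y, ∀ W ∈ C, ∀ h ∈ H, ∀ r ∈ R,
      robustLoss B φ ψ y W (hstar y W) (rstar y W) ≤ robustLoss B φ ψ y W h r)
    (huniq : ∀ y ∈ Y, ∀ W ∈ C, ∀ h ∈ H, ∀ r ∈ R,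
      (∀ h' ∈ H, ∀ r' ∈ R, robustLoss B φ ψ y W h r ≤ robustLoss B φ ψ y W h' r') →
      h = hstar y W ∧ r = rstar y W) :
    ∃ c : ℝ, 0 < c ∧ ∀ y₁ ∈ Y, ∀ y₂ ∈ Y, ∀ W₁ ∈ C, ∀ W₂ ∈ C,
      max ‖hstar y₁ W₁ - hstar y₂ W₂‖ ‖rstar y₁ W₁ - rstar y₂ W₂‖
        ≤ c * (‖y₁ - y₂‖ + ‖W₁ - W₂‖) := by
  have hsc' (t : Y × C) : StrongConvexOnENN (H ×ˢ R) ν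
      (regLeastSquares (fun p ↦ φ p.1 + ψ p.2) (t.1 : E) ((B t.2).coprod (.id ℝ E))) := by
    rw [← robustLoss_eq_regLeastSquares]
    exact .of_prod hν.le hH hR (hsc t.1 t.1.2 t.2 t.2.2)
  have hmin' (t : Y × C) :=
    isMinOn_regLeastSquares_coprod_id_iff.2 (hmin t.1 t.1.2 t.2 t.2.2)
  have huniq' (t : Y × C) (p : F × E) (hp : p ∈ H ×ˢ R) (hpmin : IsMinOn
      (regLeastSquares (fun p ↦ φ p.1 + ψ p.2) (t.1 : E) ((B t.2).coprod (.id ℝ E))) (H ×ˢ R) p) :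
      p = (hstar t.1 t.2, rstar t.1 t.2) :=
    Prod.ext_iff.2 (huniq t.1 t.1.2 t.2 t.2.2 p.1 hp.1 p.2 hp.2
      (isMinOn_regLeastSquares_coprod_id_iff.1 hpmin))
  have hlip := lipschitzWith_coprod_id B
  have hY' : Bornology.IsBounded (Set.range fun t : Y × C ↦ (t.1 : E)) :=
    hY.subset (Set.range_subset_iff.2 fun t ↦ t.1.2)
  have hL : Bornology.IsBounded
      (Set.range fun t : Y × C ↦ (B t.2).coprod (ContinuousLinearMap.id ℝ E)) :=
    (hlip.isBounded_image hC).subset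
      (Set.range_subset_iff.2 fun t ↦ Set.mem_image_of_mem _ t.2.2)
  obtain ⟨c, hc, hcle⟩ := exists_norm_argmin_regLeastSquares_sub_le hν hY' hL hsc'
    (fun t ↦ ⟨hstar_mem t.1 t.1.2 t.2 t.2.2, rstar_mem t.1 t.1.2 t.2 t.2.2⟩) hmin' huniq'
  refine ⟨c * (1 + ‖B‖), by positivity, fun y₁ hy₁ y₂ hy₂ W₁ hW₁ W₂ hW₂ ↦ ?_⟩
  have hL_sub : ‖(B W₁).coprod (.id ℝ E) - (B W₂).coprod (.id ℝ E)‖ ≤ ‖B‖ * ‖W₁ - W₂‖ :=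
    hlip.norm_sub_le W₁ W₂
  calc max ‖hstar y₁ W₁ - hstar y₂ W₂‖ ‖rstar y₁ W₁ - rstar y₂ W₂‖
      = ‖(hstar y₁ W₁, rstar y₁ W₁) - (hstar y₂ W₂, rstar y₂ W₂)‖ := rfl
    _ ≤ c * (‖y₁ - y₂‖ + ‖(B W₁).coprod (.id ℝ E) - (B W₂).coprod (.id ℝ E)‖) :=
        hcle (⟨y₁, hy₁⟩, ⟨W₁, hW₁⟩) (⟨y₂, hy₂⟩, ⟨W₂, hW₂⟩)
    _ ≤ c * ((1 + ‖B‖) * ‖y₁ - y₂‖ + (1 + ‖B‖) * ‖W₁ - W₂‖) := by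
        gcongr
        · exact le_mul_of_one_le_left (norm_nonneg _) (le_add_of_nonneg_right (norm_nonneg B))
        · exact hL_sub.trans (by gcongr; exact le_add_of_nonneg_left zero_le_one)
    _ = c * (1 + ‖B‖) * (‖y₁ - y₂‖ + ‖W₁ - W₂‖) := by ring

section MatrixVectorProduct

variable {d k : ℕ}

lemma matMulVec_apply (W : Mat d k) (h : Vec k) (i : Fin d) :
    matMulVec W h i = ∑ j, W (i, j) * h j := rfl

lemma norm_matMulVec_le (W : Mat d k) (h : Vec k) : ‖matMulVec W h‖ ≤ ‖W‖ * ‖h‖ := by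
  refine le_of_sq_le_sq ?_ (by positivity)
  simp only [mul_pow, EuclideanSpace.real_norm_sq_eq, Fintype.sum_prod_type, matMulVec_apply]
  rw [Finset.sum_mul]
  exact Finset.sum_le_sum fun i _ ↦ Finset.sum_mul_sq_le_sq_mul_sq _ _ _

/-- `matMulVec` as a bounded bilinear map, for the Frobenius norm on matrices. -/
def matMulVecL : Mat d k →L[ℝ] Vec k →L[ℝ] Vec d :=
  LinearMap.mkContinuous₂
    (LinearMap.mk₂ ℝ matMulVec
      (fun _ _ _ ↦ by ext i; simp [matMulVec_apply, add_mul, Finset.sum_add_distrib])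
      (fun _ _ _ ↦ by ext i; simp [matMulVec_apply, Finset.mul_sum, mul_assoc])
      (fun _ _ _ ↦ by ext i; simp [matMulVec_apply, mul_add, Finset.sum_add_distrib])
      (fun _ _ _ ↦ by ext i; simp [matMulVec_apply, Finset.mul_sum, mul_left_comm]))
    1 fun W h ↦ (one_mul ‖W‖).symm ▸ norm_matMulVec_le W h

end MatrixVectorProduct

/-- Lipschitz continuity of the minimizer map on Y × C. -/
theorem minimizer_map_lipschitz {d k : ℕ}
    (φ : Vec k → ℝ≥0∞) (ϕ' : Vec d → ℝ≥0∞)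
    (H : Set (Vec k)) (R : Set (Vec d)) (ν : ℝ) (hν : 0 < ν)
    (hφconv : ConvexFnENN φ) (hφproper : ∃ h, φ h ≠ ⊤) (hφclosed : LowerSemicontinuous φ)
    (hϕconv : ConvexFnENN ϕ') (hϕproper : ∃ r, ϕ' r ≠ ⊤) (hϕclosed : LowerSemicontinuous ϕ')
    (hHne : H.Nonempty) (hHconv : Convex ℝ H) (hHcomp : IsCompact H)
    (hRne : R.Nonempty) (hRconv : Convex ℝ R) (hRcomp : IsCompact R)
    -- joint ν-strong convexity of `ℓ̃₂(y, W, ·, ·)` on `H × R`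
    (hsc : ∀ (y : Vec d) (W : Mat d k), ∀ h₁ ∈ H, ∀ h₂ ∈ H, ∀ r₁ ∈ R, ∀ r₂ ∈ R,
      ∀ a b : ℝ, 0 ≤ a → 0 ≤ b → a + b = 1 →
        ell2t φ ϕ' y W (a • h₁ + b • h₂) (a • r₁ + b • r₂)
            + ENNReal.ofReal (ν / 2 * (a * b) * (‖h₁ - h₂‖ ^ 2 + ‖r₁ - r₂‖ ^ 2))
          ≤ ENNReal.ofReal a * ell2t φ ϕ' y W h₁ r₁ + ENNReal.ofReal b * ell2t φ ϕ' y W h₂ r₂)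
    -- `(hstar y W, rstar y W)` is the (unique) minimizer of `ℓ̃₂(y, W, ·, ·)` over `H × R`
    (hstar : Vec d → Mat d k → Vec k) (rstar : Vec d → Mat d k → Vec d)
    (hstar_mem : ∀ y W, hstar y W ∈ H) (rstar_mem : ∀ y W, rstar y W ∈ R)
    (hmin : ∀ (y : Vec d) (W : Mat d k), ∀ h ∈ H, ∀ r ∈ R,
        ell2t φ ϕ' y W (hstar y W) (rstar y W) ≤ ell2t φ ϕ' y W h r)
    (huniq : ∀ (y : Vec d) (W : Mat d k), ∀ h ∈ H, ∀ r ∈ R,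
        (∀ h' ∈ H, ∀ r' ∈ R, ell2t φ ϕ' y W h r ≤ ell2t φ ϕ' y W h' r') →
        h = hstar y W ∧ r = rstar y W)
    (Y : Set (Vec d)) (hYcomp : IsCompact Y)
    (C : Set (Mat d k)) (hCcomp : IsCompact C) (hCconv : Convex ℝ C) :
    ∃ c : ℝ, 0 < c ∧ ∀ y₁ ∈ Y, ∀ y₂ ∈ Y, ∀ W₁ ∈ C, ∀ W₂ ∈ C,
      max ‖hstar y₁ W₁ - hstar y₂ W₂‖ ‖rstar y₁ W₁ - rstar y₂ W₂‖
        ≤ c * (‖y₁ - y₂‖ + ‖W₁ - W₂‖) :=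
  minimizer_map_lipschitz_general matMulVecL hν hHconv hRconv hYcomp.isBounded hCcomp.isBounded
    (fun y _ W _ ↦ hsc y W) (fun y _ W _ ↦ hstar_mem y W) (fun y _ W _ ↦ rstar_mem y W)
    (fun y _ W _ ↦ hmin y W) (fun y _ W _ ↦ huniq y W)
end
end

section
/- Let G₁, …, G_n : ℝ^{d×k} → ℝ^{d×k} be maps that are each L-Lipschitz with respect to the Frobenius norm, let Ḡ(W) = (1/n) Σ_{i=1}^n G_i(W), fix W, W⁰ ∈ ℝ^{d×k}, and let S be a uniformly random subset of {1,…,n} of size b (1 ≤ b ≤ n, n ≥ 2). Define the variance-reduced estimator V = (1/b) Σ_{i∈S} ( G_i(W) − G_i(W⁰) ) + Ḡ(W⁰). Then E_S[V] = Ḡ(W) and E_S[ ‖V − Ḡ(W)‖² ] ≤ α(n,b) L² ‖W − W⁰‖², where α(n,b) = (n − b)/(b(n − 1)). (In the paper this is applied with G_i(W) = ∇_W ℓ2(y_i, W).) -/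
noncomputable section

/-!
`V - Ḡ(W)` is the error made in estimating the mean of `f i = G i W - G i W⁰` from a sample drawn
without replacement. Centre `f` at its mean and call the result `y`. As `∑ i, y i = 0`, the sum over
a sample `A` is minus the sum over its complement, so `‖∑ i ∈ A, y i‖²` is minus the sum of
`⟪y i, y j⟫` over `i ∈ A` and `j ∉ A`. Every ordered pair `i ≠ j` is separated in this way by
`(n - 2).choose (b - 1)` samples, and the inner products over all such pairs add up to
`-∑ i, ‖y i‖²`. Finally, centring does not increase the second moment, and the Lipschitz condition
bounds each `‖f i‖` by `L ‖W - W⁰‖`.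
-/

open Finset
open scoped BigOperators NNReal

/-- The factor `α(n, b) = (n - b) / (b (n - 1))` by which the variance of `n` values is multiplied
to obtain the variance of the mean of `b` of them drawn without replacement. It takes the junk value
`0` at `b = 0` and at `n = 1`. -/
def samplingVarianceFactor (n b : ℕ) : ℝ := (n - b) / (b * (n - 1))

lemma samplingVarianceFactor_nonneg {n b : ℕ} (hn : 1 ≤ n) (hbn : b ≤ n) :
    0 ≤ samplingVarianceFactor n b := by
  have hn' : (1 : ℝ) ≤ n := mod_cast hn
  have hbn' : (b : ℝ) ≤ n := mod_cast hbn
  exact div_nonneg (sub_nonneg.2 hbn') (mul_nonneg b.cast_nonneg (sub_nonneg.2 hn'))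

lemma choose_mul_samplingVarianceFactor {m b : ℕ} (hb : b ≤ m + 1) :
    ((m + 2).choose (b + 1) : ℝ) * (b + 1) ^ 2 * samplingVarianceFactor (m + 2) (b + 1) =
      (m + 2) * m.choose b := by
  have absorb_succ : (m + 2 : ℝ) * (m + 1).choose b = (m + 2).choose (b + 1) * (b + 1) :=
    mod_cast Nat.add_one_mul_choose_eq (m + 1) b
  have absorb : (m.choose b : ℝ) * (m + 1) = (m + 1).choose b * (m + 1 - b) := by
    have := congrArg (Nat.cast : ℕ → ℝ) (Nat.choose_mul_succ_eq m b)
    rwa [Nat.cast_mul, Nat.cast_mul, Nat.cast_sub hb, Nat.cast_add_one] at this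
  rw [samplingVarianceFactor]
  push_cast
  rw [show (m + 2 - 1 : ℝ) = m + 1 by ring]
  field_simp
  linear_combination -(m + 1 - b : ℝ) * absorb_succ - (m + 2 : ℝ) * absorb

section DoubleCounting

variable {ι M : Type*} [AddCommMonoid M]

lemma sum_powersetCard_succ_sum (s : Finset ι) (b : ℕ) (f : ι → M) :
    ∑ A ∈ s.powersetCard (b + 1), ∑ i ∈ A, f i = (#s - 1).choose b • ∑ i ∈ s, f i := by
  classical
  have card_mem (i : ι) (hi : i ∈ s) :
      #{A ∈ s.powersetCard (b + 1) | i ∈ A} = (#s - 1).choose b := by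
    simpa only [singleton_subset_iff, card_singleton, Nat.add_sub_cancel] using
      card_filter_powersetCard_subset {i} s (b + 1) (singleton_subset_iff.2 hi) (by simp)
  calc ∑ A ∈ s.powersetCard (b + 1), ∑ i ∈ A, f i
      = ∑ i ∈ s, ∑ A ∈ s.powersetCard (b + 1) with i ∈ A, f i :=
        sum_comm' fun A i ↦ by simp only [mem_powersetCard, mem_filter]; grind
    _ = (#s - 1).choose b • ∑ i ∈ s, f i := by
        rw [smul_sum]
        exact sum_congr rfl fun i hi ↦ by rw [sum_const, card_mem i hi]

lemma sum_powersetCard_sum_sdiff [DecidableEq ι] (s : Finset ι) (b : ℕ)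
    (f : Finset ι → ι → M) :
    ∑ A ∈ s.powersetCard b, ∑ j ∈ s \ A, f A j =
      ∑ j ∈ s, ∑ A ∈ (s.erase j).powersetCard b, f A j :=
  sum_comm' fun A j ↦ by simp only [mem_powersetCard, mem_sdiff, subset_erase]; tauto

end DoubleCounting

section Mean

variable {ι E : Type*} [AddCommMonoid E] [Module ℚ≥0 E]

lemma one_div_card_smul_sum (𝕜 : Type*) [DivisionSemiring 𝕜] [CharZero 𝕜] [Module 𝕜 E]
    (s : Finset ι) (f : ι → E) : (1 / #s : 𝕜) • ∑ i ∈ s, f i = 𝔼 i ∈ s, f i := by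
  rw [expect, ← NNRat.cast_smul_eq_nnqsmul 𝕜, NNRat.cast_inv, NNRat.cast_natCast, one_div]

lemma expect_powersetCard_expect {s : Finset ι} {b : ℕ} (hb : b ≠ 0) (hbs : b ≤ #s) (f : ι → E) :
    𝔼 A ∈ s.powersetCard b, 𝔼 i ∈ A, f i = 𝔼 i ∈ s, f i := by
  obtain ⟨c, rfl⟩ := Nat.exists_eq_succ_of_ne_zero hb
  have absorb : (#s : ℚ≥0) * (#s - 1).choose c = (#s).choose (c + 1) * (c + 1) := by
    obtain ⟨m, hm⟩ := Nat.exists_eq_add_of_le' (show 1 ≤ #s by lia)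
    rw [hm]
    exact_mod_cast Nat.add_one_mul_choose_eq m c
  have card_cast_ne_zero : (#s : ℚ≥0) ≠ 0 := by norm_cast; lia
  have choose_ne_zero : ((#s).choose (c + 1) : ℚ≥0) ≠ 0 := mod_cast (Nat.choose_pos hbs).ne'
  calc 𝔼 A ∈ s.powersetCard (c + 1), 𝔼 i ∈ A, f i
      = 𝔼 A ∈ s.powersetCard (c + 1), (c + 1 : ℚ≥0)⁻¹ • ∑ i ∈ A, f i :=
        expect_congr rfl fun A hA ↦ by
          rw [expect, (mem_powersetCard.1 hA).2, Nat.cast_add_one]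
    _ = (((#s).choose (c + 1) : ℚ≥0)⁻¹ * (c + 1 : ℚ≥0)⁻¹ * (#s - 1).choose c) •
          ∑ i ∈ s, f i := by
        rw [expect, ← smul_sum, sum_powersetCard_succ_sum, card_powersetCard, mul_smul, mul_smul,
          Nat.cast_smul_eq_nsmul]
    _ = 𝔼 i ∈ s, f i := by
        rw [expect]
        congr 1
        field_simp
        rw [mul_comm, absorb]

end Mean

section Variance

variable {ι E : Type*} [SeminormedAddCommGroup E] [InnerProductSpace ℝ E] {s : Finset ι}

lemma sum_powersetCard_succ_norm_sum_sq (b : ℕ) {y : ι → E} (hy : ∑ i ∈ s, y i = 0) :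
    ∑ A ∈ s.powersetCard (b + 1), ‖∑ i ∈ A, y i‖ ^ 2 =
      (#s - 2).choose b * ∑ i ∈ s, ‖y i‖ ^ 2 := by
  classical
  have norm_sq_eq (A : Finset ι) (hA : A ∈ s.powersetCard (b + 1)) :
      ‖∑ i ∈ A, y i‖ ^ 2 = -∑ j ∈ s \ A, inner ℝ (∑ i ∈ A, y i) (y j) := by
    have sum_eq_neg_sum_sdiff : ∑ i ∈ A, y i = -∑ j ∈ s \ A, y j := by
      rw [eq_neg_iff_add_eq_zero, add_comm, sum_sdiff (mem_powersetCard.1 hA).1, hy]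
    rw [← inner_sum, ← inner_neg_right, ← sum_eq_neg_sum_sdiff, real_inner_self_eq_norm_sq]
  have sum_erase_eq (j : ι) (hj : j ∈ s) :
      ∑ A ∈ (s.erase j).powersetCard (b + 1), ∑ i ∈ A, y i = -((#s - 2).choose b • y j) := by
    have sum_erase_eq_neg : ∑ i ∈ s.erase j, y i = -y j := by
      rw [eq_neg_iff_add_eq_zero, sum_erase_add _ _ hj, hy]
    rw [sum_powersetCard_succ_sum, sum_erase_eq_neg, card_erase_of_mem hj, Nat.sub_sub, smul_neg]
  calc ∑ A ∈ s.powersetCard (b + 1), ‖∑ i ∈ A, y i‖ ^ 2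
      = -∑ j ∈ s, ∑ A ∈ (s.erase j).powersetCard (b + 1), inner ℝ (∑ i ∈ A, y i) (y j) := by
        rw [sum_congr rfl norm_sq_eq, sum_neg_distrib, sum_powersetCard_sum_sdiff]
    _ = ∑ j ∈ s, (#s - 2).choose b * ‖y j‖ ^ 2 := by
        rw [← sum_neg_distrib]
        refine sum_congr rfl fun j hj ↦ ?_
        rw [← sum_inner, sum_erase_eq j hj, inner_neg_left, neg_neg, ← Nat.cast_smul_eq_nsmul ℝ,
          real_inner_smul_left, real_inner_self_eq_norm_sq]
    _ = (#s - 2).choose b * ∑ i ∈ s, ‖y i‖ ^ 2 := by rw [mul_sum]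

variable [Module ℚ≥0 E] {b : ℕ}

lemma expect_powersetCard_norm_expect_sq (hs : 2 ≤ #s) (hb : b ≠ 0) (hbs : b ≤ #s) {y : ι → E}
    (hy : ∑ i ∈ s, y i = 0) :
    𝔼 A ∈ s.powersetCard b, ‖𝔼 i ∈ A, y i‖ ^ 2 =
      samplingVarianceFactor #s b * 𝔼 i ∈ s, ‖y i‖ ^ 2 := by
  obtain ⟨c, rfl⟩ := Nat.exists_eq_succ_of_ne_zero hb
  obtain ⟨m, hm⟩ := Nat.exists_eq_add_of_le' hs
  have choose_ne_zero : ((m + 2).choose (c + 1) : ℝ) ≠ 0 := mod_cast (Nat.choose_pos (hm ▸ hbs)).ne'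
  have norm_expect_sq (A : Finset ι) (hA : A ∈ s.powersetCard (c + 1)) :
      ‖𝔼 i ∈ A, y i‖ ^ 2 = ‖∑ i ∈ A, y i‖ ^ 2 / (c + 1) ^ 2 := by
    rw [← one_div_card_smul_sum ℝ, (mem_powersetCard.1 hA).2, norm_smul, mul_pow, Real.norm_eq_abs,
      sq_abs, Nat.cast_add_one, one_div, inv_pow, inv_mul_eq_div]
  rw [expect_congr rfl norm_expect_sq, ← expect_div, expect_eq_sum_div_card,
    expect_eq_sum_div_card, sum_powersetCard_succ_norm_sum_sq c hy, card_powersetCard, hm,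
    Nat.add_sub_cancel]
  have choose_mul := choose_mul_samplingVarianceFactor (show c ≤ m + 1 by lia)
  push_cast
  field_simp
  linear_combination -(∑ i ∈ s, ‖y i‖ ^ 2) * choose_mul

lemma expect_powersetCard_norm_expect_sub_expect_sq (hs : 2 ≤ #s) (hb : b ≠ 0) (hbs : b ≤ #s)
    (f : ι → E) :
    𝔼 A ∈ s.powersetCard b, ‖𝔼 i ∈ A, f i - 𝔼 i ∈ s, f i‖ ^ 2 =
      samplingVarianceFactor #s b * 𝔼 i ∈ s, ‖f i - 𝔼 j ∈ s, f j‖ ^ 2 := by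
  have centered : ∑ i ∈ s, (f i - 𝔼 j ∈ s, f j) = 0 := by
    rw [sum_sub_distrib, sum_const, card_smul_expect, sub_self]
  rw [← expect_powersetCard_norm_expect_sq hs hb hbs centered]
  refine expect_congr rfl fun A hA ↦ ?_
  have nonempty : A.Nonempty := card_ne_zero.1 ((mem_powersetCard.1 hA).2 ▸ hb)
  rw [expect_sub_distrib, expect_const nonempty]

lemma expect_norm_sub_expect_sq_le (s : Finset ι) (f : ι → E) :
    𝔼 i ∈ s, ‖f i - 𝔼 j ∈ s, f j‖ ^ 2 ≤ 𝔼 i ∈ s, ‖f i‖ ^ 2 := by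
  obtain rfl | hs := s.eq_empty_or_nonempty
  · simp
  set μ := 𝔼 j ∈ s, f j
  have expect_inner : 𝔼 i ∈ s, inner ℝ (f i) μ = ‖μ‖ ^ 2 := by
    rw [← one_div_card_smul_sum ℝ, ← sum_inner, smul_eq_mul, ← real_inner_smul_left,
      one_div_card_smul_sum, real_inner_self_eq_norm_sq]
  calc 𝔼 i ∈ s, ‖f i - μ‖ ^ 2
      = 𝔼 i ∈ s, ‖f i‖ ^ 2 - ‖μ‖ ^ 2 := by
        simp only [norm_sub_sq_real, expect_add_distrib, expect_sub_distrib, ← mul_expect,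
          expect_inner, expect_const hs]
        ring
    _ ≤ 𝔼 i ∈ s, ‖f i‖ ^ 2 := sub_le_self _ (sq_nonneg _)

end Variance

section ControlVariate

variable {ι E : Type*} {s : Finset ι} {b : ℕ}

lemma expect_powersetCard_controlVariate [AddCommGroup E] [Module ℚ≥0 E] (hb : b ≠ 0)
    (hbs : b ≤ #s) (f g : ι → E) :
    𝔼 A ∈ s.powersetCard b, (𝔼 i ∈ A, (f i - g i) + 𝔼 i ∈ s, g i) = 𝔼 i ∈ s, f i := by
  rw [expect_add_distrib, expect_const (powersetCard_nonempty.2 hbs),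
    expect_powersetCard_expect hb hbs, expect_sub_distrib, sub_add_cancel]

lemma expect_powersetCard_norm_controlVariate_sub_sq_le [SeminormedAddCommGroup E]
    [InnerProductSpace ℝ E] [Module ℚ≥0 E] (hs : 2 ≤ #s) (hb : b ≠ 0) (hbs : b ≤ #s)
    {f g : ι → E} {R : ℝ} (hR : ∀ i ∈ s, ‖f i - g i‖ ≤ R) :
    𝔼 A ∈ s.powersetCard b, ‖𝔼 i ∈ A, (f i - g i) + 𝔼 i ∈ s, g i - 𝔼 i ∈ s, f i‖ ^ 2 ≤
      samplingVarianceFactor #s b * R ^ 2 := by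
  have error_eq (A : Finset ι) : 𝔼 i ∈ A, (f i - g i) + 𝔼 i ∈ s, g i - 𝔼 i ∈ s, f i =
      𝔼 i ∈ A, (f i - g i) - 𝔼 i ∈ s, (f i - g i) := by
    rw [expect_sub_distrib s]
    abel
  simp only [error_eq, expect_powersetCard_norm_expect_sub_expect_sq hs hb hbs]
  refine mul_le_mul_of_nonneg_left ?_ (samplingVarianceFactor_nonneg (by lia) hbs)
  calc 𝔼 i ∈ s, ‖f i - g i - 𝔼 j ∈ s, (f j - g j)‖ ^ 2
      ≤ 𝔼 i ∈ s, ‖f i - g i‖ ^ 2 := expect_norm_sub_expect_sq_le s fun i ↦ f i - g i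
    _ ≤ R ^ 2 := expect_le (card_pos.1 (by lia)) fun i hi ↦
        pow_le_pow_left₀ (norm_nonneg _) (hR i hi) 2

end ControlVariate

theorem variance_reduced_estimator_bound_general {ι X E : Type*} [PseudoMetricSpace X]
    [SeminormedAddCommGroup E] [InnerProductSpace ℝ E] {s : Finset ι} (hs : 2 ≤ #s) {b : ℕ}
    (hb : b ≠ 0) (hbs : b ≤ #s) {L : ℝ≥0} {G : ι → X → E} (hG : ∀ i ∈ s, LipschitzWith L (G i))
    (x x₀ : X) :
    (1 / (#s).choose b : ℝ) • ∑ A ∈ s.powersetCard b,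
        ((1 / b : ℝ) • ∑ i ∈ A, (G i x - G i x₀) + (1 / #s : ℝ) • ∑ i ∈ s, G i x₀) =
      (1 / #s : ℝ) • ∑ i ∈ s, G i x ∧
    (1 / (#s).choose b : ℝ) * ∑ A ∈ s.powersetCard b,
        ‖(1 / b : ℝ) • ∑ i ∈ A, (G i x - G i x₀) + (1 / #s : ℝ) • ∑ i ∈ s, G i x₀ -
          (1 / #s : ℝ) • ∑ i ∈ s, G i x‖ ^ 2 ≤
      samplingVarianceFactor #s b * L ^ 2 * dist x x₀ ^ 2 := by
  let : Module ℚ≥0 E := Module.compHom E (algebraMap ℚ≥0 ℝ)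
  have mean_sample (A : Finset ι) (hA : A ∈ s.powersetCard b) :
      (1 / b : ℝ) • ∑ i ∈ A, (G i x - G i x₀) = 𝔼 i ∈ A, (G i x - G i x₀) := by
    rw [← (mem_powersetCard.1 hA).2, one_div_card_smul_sum]
  have norm_sub_le (i : ι) (hi : i ∈ s) : ‖G i x - G i x₀‖ ≤ L * dist x x₀ := by
    simpa only [dist_eq_norm] using (hG i hi).dist_le_mul x x₀
  rw [← smul_eq_mul, mul_assoc, ← mul_pow, ← card_powersetCard]
  simp only [one_div_card_smul_sum ℝ s]
  rw [one_div_card_smul_sum, one_div_card_smul_sum]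
  refine ⟨(expect_congr rfl fun A hA ↦ ?_).trans
      (expect_powersetCard_controlVariate hb hbs (fun i ↦ G i x) fun i ↦ G i x₀),
    (expect_congr rfl fun A hA ↦ ?_).trans_le
      (expect_powersetCard_norm_controlVariate_sub_sq_le hs hb hbs norm_sub_le)⟩ <;>
    rw [mean_sample A hA]

/-- Unbiasedness and variance bound of the variance-reduced estimator.
With `G₁,…,G_n` each `L`-Lipschitz, `Ḡ = (1/n)∑ᵢ Gᵢ`, and
`V_A = (1/b)∑_{i∈A}(Gᵢ(W) − Gᵢ(W⁰)) + Ḡ(W⁰)` for a uniformly random size-`b` subset `A`,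
we have `E[V] = Ḡ(W)` and `E‖V − Ḡ(W)‖² ≤ α(n,b) L² ‖W − W⁰‖²`. -/
theorem variance_reduced_estimator_bound {d k n : ℕ} (hn : 2 ≤ n)
    (b : ℕ) (hb1 : 1 ≤ b) (hbn : b ≤ n)
    (L : ℝ) (hL : 0 < L)
    (G : Fin n → Mat d k → Mat d k)
    (hGlip : ∀ i, ∀ x y : Mat d k, ‖G i x - G i y‖ ≤ L * ‖x - y‖)
    (W W0 : Mat d k) :
    (1 / (n.choose b) : ℝ) •
        ∑ A ∈ Finset.powersetCard b (Finset.univ : Finset (Fin n)),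
          ((1 / b : ℝ) • ∑ i ∈ A, (G i W - G i W0) + (1 / n : ℝ) • ∑ i, G i W0)
      = (1 / n : ℝ) • ∑ i, G i W
    ∧ (1 / (n.choose b) : ℝ) *
        ∑ A ∈ Finset.powersetCard b (Finset.univ : Finset (Fin n)),
          ‖(1 / b : ℝ) • ∑ i ∈ A, (G i W - G i W0) + (1 / n : ℝ) • ∑ i, G i W0
              - (1 / n : ℝ) • ∑ i, G i W‖ ^ 2
      ≤ ((n - b) / (b * (n - 1)) : ℝ) * L ^ 2 * ‖W - W0‖ ^ 2 := by
  lift L to ℝ≥0 using hL.le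
  simpa [samplingVarianceFactor, dist_eq_norm] using variance_reduced_estimator_bound_general
    (s := (univ : Finset (Fin n))) (b := b) (L := L) (G := G) (by simpa) (by lia) (by simpa)
    (fun i _ ↦ .of_dist_le_mul fun x y ↦ by simpa only [dist_eq_norm] using hGlip i x y) W W0
end
end

section
/- Let h = h₁ + h₂ on a Euclidean space ℰ, where h₁: ℰ → ℝ is differentiable with L-Lipschitz gradient and h₂: ℰ → [0,∞] is proper, closed and convex. Fix η > 0, x ∈ ℰ, d ∈ ℰ, and let y = prox_{η h₂}(x − η d). Then for every z ∈ ℰ: h(y) ≤ h(z) + ⟨y − z, ∇h₁(x) − d⟩ + (L/2 − 1/(2η)) ‖y − x‖² + (L/2 + 1/(2η)) ‖z − x‖² − (1/(2η)) ‖y − z‖². -/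
open scoped RealInnerProductSpace ENNReal

noncomputable section

/-- `p = prox_{ηγ}(x)`, i.e. `p` minimizes `u ↦ ηγ(u) + (1/2)‖u − x‖²`. -/
def IsProxPt {E : Type*} [NormedAddCommGroup E] (γ : E → ℝ≥0∞) (η : ℝ) (x p : E) : Prop :=
  ∀ u : E, ENNReal.ofReal η * γ p + ENNReal.ofReal (‖p - x‖ ^ 2 / 2)
      ≤ ENNReal.ofReal η * γ u + ENNReal.ofReal (‖u - x‖ ^ 2 / 2)

/-!
The prox objective `u ↦ η h₂(u) + ‖u - v‖² / 2` with `v = x - η d` is 1-strongly convex, so it grows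
at least by `‖y - z‖² / 2` from its minimizer `y` to any other point `z`; expanding the squares
around `x` and dividing by `η` bounds `h₂(y) - h₂(z)`. For the smooth part, `h₁` differs from its
linearization at `x` by at most `L / 2 * ‖u - x‖²`; using this from above at `u = y` and from below
at `u = z` bounds `h₁(y) - h₁(z)`. The claim is the sum of the two bounds.
-/

open Set Filter Topology AffineMap

section NormedSpace

variable {E F : Type*} [NormedAddCommGroup E] [NormedSpace ℝ E]
  [NormedAddCommGroup F] [NormedSpace ℝ F] {s : Set E}

theorem norm_image_sub_sub_le_of_norm_hasFDerivWithin_sub_le {f : E → F} {f' : E → E →L[ℝ] F}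
    {x y : E} {L : ℝ} (hs : StarConvex ℝ x s) (hf : ∀ a ∈ s, HasFDerivWithinAt f (f' a) s a)
    (hL : ∀ a ∈ s, ‖f' a - f' x‖ ≤ L * ‖a - x‖) (hy : y ∈ s) :
    ‖f y - f x - f' x (y - x)‖ ≤ L / 2 * ‖y - x‖ ^ 2 := by
  have hmaps : MapsTo (lineMap x y : ℝ → E) (Icc 0 1) s := fun t ht ↦ by
    simpa [lineMap_apply, add_comm] using hs.add_smul_sub_mem hy ht.1 ht.2
  let r : ℝ → F := fun t ↦ f (lineMap x y t) - f x - t • f' x (y - x)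
  have hr : ∀ t ∈ Icc (0 : ℝ) 1,
      HasDerivWithinAt r ((f' (lineMap x y t) - f' x) (y - x)) (Icc 0 1) t := fun t ht ↦ by
    have hfline := (hf _ (hmaps ht)).comp_hasDerivWithinAt t hasDerivWithinAt_lineMap hmaps
    exact ((hfline.sub_const (f x)).sub
      ((hasDerivWithinAt_id t (Icc 0 1)).smul_const (f' x (y - x)))).congr_deriv (by simp)
  have hbound : ∀ t ∈ Ico (0 : ℝ) 1,
      ‖(f' (lineMap x y t) - f' x) (y - x)‖ ≤ L * t * ‖y - x‖ ^ 2 := fun t ht ↦ calc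
    _ ≤ ‖f' (lineMap x y t) - f' x‖ * ‖y - x‖ := ContinuousLinearMap.le_opNorm _ _
    _ ≤ L * ‖lineMap x y t - x‖ * ‖y - x‖ := by
      gcongr
      exact hL _ (hmaps (Ico_subset_Icc_self ht))
    _ = L * t * ‖y - x‖ ^ 2 := by
      rw [lineMap_apply, vsub_eq_sub, vadd_eq_add, add_sub_cancel_right, norm_smul,
        Real.norm_of_nonneg ht.1]
      ring
  have hquad : ∀ t : ℝ,
      HasDerivAt (fun t ↦ L / 2 * t ^ 2 * ‖y - x‖ ^ 2) (L * t * ‖y - x‖ ^ 2) t := fun t ↦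
    (((hasDerivAt_pow 2 t).const_mul (L / 2)).mul_const _).congr_deriv (by ring)
  have hr_le := image_norm_le_of_norm_deriv_right_le_deriv_boundary
    (fun t ht ↦ (hr t ht).continuousWithinAt)
    (fun t ht ↦ (hr t (Ico_subset_Icc_self ht)).mono_of_mem_nhdsWithin (Icc_mem_nhdsGE_of_mem ht))
    (by simp [r]) hquad hbound (right_mem_Icc.2 zero_le_one)
  simpa [r] using hr_le

theorem add_modulus_le_of_uniformConvexOn_of_isMinOn {f : E → ℝ} {φ : ℝ → ℝ} {p z : E}
    (hf : UniformConvexOn s φ f) (hmin : IsMinOn f s p) (hp : p ∈ s) (hz : z ∈ s) :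
    f p + φ ‖p - z‖ ≤ f z := by
  have hsegment : ∀ t ∈ Ioo (0 : ℝ) 1, f p + (1 - t) * φ ‖p - z‖ ≤ f z := fun t ht ↦ by
    have ht_compl : 0 ≤ 1 - t := sub_nonneg.2 ht.2.le
    have hle : f p ≤ (1 - t) * f p + t * f z - (1 - t) * t * φ ‖p - z‖ :=
      (hmin (hf.1 hp hz ht_compl ht.1.le (sub_add_cancel 1 t))).trans
        (hf.2 hp hz ht_compl ht.1.le (sub_add_cancel 1 t))
    refine le_of_mul_le_mul_left ?_ ht.1
    linarith
  have hlim : Tendsto (fun t : ℝ ↦ f p + (1 - t) * φ ‖p - z‖) (𝓝[>] 0)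
      (𝓝 (f p + φ ‖p - z‖)) := by
    have hcont : Continuous fun t : ℝ ↦ f p + (1 - t) * φ ‖p - z‖ := by fun_prop
    simpa using (hcont.tendsto 0).mono_left nhdsWithin_le_nhds
  exact le_of_tendsto hlim (eventually_of_mem (Ioo_mem_nhdsGT one_pos) hsegment)

end NormedSpace

theorem ConvexFnENN.convexOn_toReal {E : Type*} [AddCommMonoid E] [Module ℝ E] {γ : E → ℝ≥0∞}
    (hγ : ConvexFnENN γ) : ConvexOn ℝ {u | γ u ≠ ⊤} fun u ↦ (γ u).toReal := by
  have hfinite : ∀ {u w : E} (a b : ℝ), γ u ≠ ⊤ → γ w ≠ ⊤ →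
      ENNReal.ofReal a * γ u + ENNReal.ofReal b * γ w ≠ ⊤ := fun a b hu hw ↦
    ENNReal.add_ne_top.2
      ⟨ENNReal.mul_ne_top ENNReal.ofReal_ne_top hu, ENNReal.mul_ne_top ENNReal.ofReal_ne_top hw⟩
  refine ⟨fun u hu w hw a b ha hb hab ↦
    ne_top_of_le_ne_top (hfinite a b hu hw) (hγ u w a b ha hb hab),
    fun u hu w hw a b ha hb hab ↦ ?_⟩
  refine (ENNReal.toReal_mono (hfinite a b hu hw) (hγ u w a b ha hb hab)).trans_eq ?_
  rw [ENNReal.toReal_add (ENNReal.mul_ne_top ENNReal.ofReal_ne_top hu)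
    (ENNReal.mul_ne_top ENNReal.ofReal_ne_top hw), ENNReal.toReal_mul, ENNReal.toReal_mul,
    ENNReal.toReal_ofReal ha, ENNReal.toReal_ofReal hb, smul_eq_mul, smul_eq_mul]

/-- The function `u ↦ ηγ(u) + (1/2)‖u − v‖²` minimized by `prox_{ηγ}(v)`, as a real-valued function.
It is meaningful only where `γ` is finite, since `(⊤ : ℝ≥0∞).toReal = 0`. -/
def proxObjective {E : Type*} [NormedAddCommGroup E] (γ : E → ℝ≥0∞) (η : ℝ) (v u : E) : ℝ :=
  η * (γ u).toReal + ‖u - v‖ ^ 2 / 2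

section IsProxPt

variable {E : Type*} [NormedAddCommGroup E] {γ : E → ℝ≥0∞} {η : ℝ} {v p z : E}

theorem IsProxPt.ne_top (hp : IsProxPt γ η v p) (hη : 0 < η) (hz : γ z ≠ ⊤) : γ p ≠ ⊤ := by
  intro hp_top
  refine ne_top_of_le_ne_top ?_ (hp z) ?_
  · finiteness
  · rw [hp_top, ENNReal.mul_top (ENNReal.ofReal_pos.2 hη).ne', top_add]

theorem ofReal_proxObjective (hη : 0 ≤ η) (hz : γ z ≠ ⊤) :
    ENNReal.ofReal (proxObjective γ η v z) =
      ENNReal.ofReal η * γ z + ENNReal.ofReal (‖z - v‖ ^ 2 / 2) := by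
  rw [proxObjective, ENNReal.ofReal_add (by positivity) (by positivity), ENNReal.ofReal_mul hη,
    ENNReal.ofReal_toReal hz]

theorem IsProxPt.isMinOn_proxObjective (hp : IsProxPt γ η v p) (hη : 0 < η) :
    IsMinOn (proxObjective γ η v) {u | γ u ≠ ⊤} p := by
  intro u hu
  have hu_nonneg : 0 ≤ proxObjective γ η v u := by unfold proxObjective; positivity
  have hle := hp u
  rwa [← ofReal_proxObjective hη.le (hp.ne_top hη hu), ← ofReal_proxObjective hη.le hu,
    ENNReal.ofReal_le_ofReal_iff hu_nonneg] at hle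

end IsProxPt

section InnerProductSpace

variable {E : Type*} [NormedAddCommGroup E] [InnerProductSpace ℝ E]

theorem strongConvexOn_sq_norm_sub_div_two {s : Set E} (hs : Convex ℝ s) (v : E) :
    StrongConvexOn s 1 fun u ↦ ‖u - v‖ ^ 2 / 2 := by
  rw [strongConvexOn_iff_convex]
  have haffine : (fun u : E ↦ ‖u - v‖ ^ 2 / 2 - 1 / 2 * ‖u‖ ^ 2) =
      fun u ↦ innerₛₗ ℝ (-v) u + ‖v‖ ^ 2 / 2 := by
    ext u
    rw [norm_sub_sq_real, innerₛₗ_apply_apply, inner_neg_left, real_inner_comm]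
    ring
  rw [haffine]
  exact ((innerₛₗ ℝ (-v)).convexOn hs).add_const _

variable {γ : E → ℝ≥0∞} {η : ℝ}

theorem ConvexFnENN.strongConvexOn_proxObjective (hγ : ConvexFnENN γ) (hη : 0 ≤ η) (v : E) :
    StrongConvexOn {u | γ u ≠ ⊤} 1 (proxObjective γ η v) := by
  have hdom := hγ.convexOn_toReal
  simpa only [zero_add] using! (hdom.smul hη).uniformConvexOn_zero.add
    (strongConvexOn_sq_norm_sub_div_two hdom.1 v)

theorem IsProxPt.proxObjective_add_le {v p z : E} (hp : IsProxPt γ η v p) (hγ : ConvexFnENN γ)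
    (hη : 0 < η) (hz : γ z ≠ ⊤) :
    proxObjective γ η v p + 1 / 2 * ‖p - z‖ ^ 2 ≤ proxObjective γ η v z :=
  add_modulus_le_of_uniformConvexOn_of_isMinOn (hγ.strongConvexOn_proxObjective hη.le v)
    (hp.isMinOn_proxObjective hη) (hp.ne_top hη hz) hz

theorem IsProxPt.toReal_le_of_sub_smul {x d y z : E} (hy : IsProxPt γ η (x - η • d) y)
    (hγ : ConvexFnENN γ) (hη : 0 < η) (hz : γ z ≠ ⊤) :
    (γ y).toReal ≤ (γ z).toReal - ⟪y - z, d⟫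
      + 1 / (2 * η) * (‖z - x‖ ^ 2 - ‖y - x‖ ^ 2 - ‖y - z‖ ^ 2) := by
  have hexpand : ∀ u : E, ‖u - (x - η • d)‖ ^ 2
      = ‖u - x‖ ^ 2 + 2 * η * ⟪u - x, d⟫ + ‖η • d‖ ^ 2 := fun u ↦ by
    rw [← sub_add, norm_add_sq_real, inner_smul_right]
    ring
  have hinner : ⟪y - z, d⟫ = ⟪y - x, d⟫ - ⟪z - x, d⟫ := by
    rw [← inner_sub_left, sub_sub_sub_cancel_right]
  have hgrowth := hy.proxObjective_add_le hγ hη hz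
  rw [proxObjective, proxObjective, hexpand, hexpand] at hgrowth
  rw [hinner]
  refine le_of_mul_le_mul_left ?_ hη
  field_simp
  linarith

theorem composite_prox_upper_bound_general {s : Set E} {h₁ : E → ℝ} {h₁' : E → StrongDual ℝ E}
    {h₂ : E → ℝ≥0∞} {L : ℝ} {x d y z : E} (hs : StarConvex ℝ x s)
    (hdiff : ∀ a ∈ s, HasFDerivWithinAt h₁ (h₁' a) s a)
    (hlip : ∀ a ∈ s, ‖h₁' a - h₁' x‖ ≤ L * ‖a - x‖)
    (hconv : ConvexFnENN h₂) (hη : 0 < η) (hy : IsProxPt h₂ η (x - η • d) y)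
    (hys : y ∈ s) (hzs : z ∈ s) :
    (h₁ y : EReal) + (h₂ y : EReal)
      ≤ (h₁ z : EReal) + (h₂ z : EReal)
        + ((h₁' x (y - z) - ⟪y - z, d⟫ + (L / 2 - 1 / (2 * η)) * ‖y - x‖ ^ 2
            + (L / 2 + 1 / (2 * η)) * ‖z - x‖ ^ 2
            - (1 / (2 * η)) * ‖y - z‖ ^ 2 : ℝ) : EReal) := by
  by_cases hz : h₂ z = ⊤
  · rw [hz, EReal.coe_ennreal_top, EReal.coe_add_top, EReal.top_add_coe]
    exact le_top
  have hprox := hy.toReal_le_of_sub_smul hconv hη hz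
  have hdescent_y := (abs_le.1 <|
    norm_image_sub_sub_le_of_norm_hasFDerivWithin_sub_le hs hdiff hlip hys).2
  have hdescent_z := (abs_le.1 <|
    norm_image_sub_sub_le_of_norm_hasFDerivWithin_sub_le hs hdiff hlip hzs).1
  have hlinear : h₁' x (y - z) = h₁' x (y - x) - h₁' x (z - x) := by
    rw [← map_sub, sub_sub_sub_cancel_right]
  rw [← EReal.coe_ennreal_toReal (hy.ne_top hη hz), ← EReal.coe_ennreal_toReal hz]
  norm_cast
  linarith

end InnerProductSpace

/-- Upper bound for a composite function after a proximal step;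
Lemma S-6 of the paper. Here `h = h₁ + h₂` takes values in `(-∞, ∞]`, modeled in `EReal`. -/
theorem composite_prox_upper_bound {E : Type*}
    [NormedAddCommGroup E] [InnerProductSpace ℝ E] [CompleteSpace E]
    (h₁ : E → ℝ) (h₂ : E → ℝ≥0∞) (L : ℝ) (hL : 0 ≤ L)
    (hdiff : Differentiable ℝ h₁)
    (hlip : ∀ a b : E, ‖gradient h₁ a - gradient h₁ b‖ ≤ L * ‖a - b‖)
    (hconv : ConvexFnENN h₂) (hproper : ∃ x, h₂ x ≠ ⊤) (hclosed : LowerSemicontinuous h₂)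
    (η : ℝ) (hη : 0 < η) (x d y : E)
    (hy : IsProxPt h₂ η (x - η • d) y) :
    ∀ z : E,
      (h₁ y : EReal) + (h₂ y : EReal)
        ≤ (h₁ z : EReal) + (h₂ z : EReal)
          + ((⟪y - z, gradient h₁ x - d⟫ + (L / 2 - 1 / (2 * η)) * ‖y - x‖ ^ 2
              + (L / 2 + 1 / (2 * η)) * ‖z - x‖ ^ 2
              - (1 / (2 * η)) * ‖y - z‖ ^ 2 : ℝ) : EReal) := by
  intro z
  rw [inner_sub_right, inner_gradient_right, conj_trivial]
  exact composite_prox_upper_bound_general (starConvex_univ x)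
    (fun a _ ↦ (hdiff a).hasFDerivAt.hasFDerivWithinAt)
    (fun a _ ↦ by simpa only [gradient, ← map_sub, LinearIsometryEquiv.norm_map] using hlip a x)
    hconv hη hy (mem_univ y) (mem_univ z)
end
end
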